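/- arXiv:2605.23519 — 6 statements merged into one kernel-verified Lean document; each statement's English description precedes it below -/
import Mathlib

section
/- Fix m ≥ 1 and let π ∈ 𝒜_n^{(m)} with π_k = n. If k < n (i.e., the block to the right of the maximum is nonempty), then k ≤ m. Equivalently, the maximum element of π occurs either in one of the positions 1,…,m or in the final position. -/
/-- `π` avoids the pattern 132: there are no indices `i < j < k` with `π i < π k < π j`. -/
def Avoids132 {n : ℕ} (π : Equiv.Perm (Fin n)) : Prop :=
  ¬ ∃ i j k : Fin n, i < j ∧ j < k ∧ π i < π k ∧ π k < π j

/-- `π` is `m`-bounded: adjacent entries differ by at most `m`. -/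
def MBounded (m : ℕ) {n : ℕ} (π : Equiv.Perm (Fin n)) : Prop :=
  ∀ i : ℕ, ∀ h : i + 1 < n,
    |(((π ⟨i + 1, h⟩ : Fin n) : ℕ) : ℤ) - (((π ⟨i, by omega⟩ : Fin n) : ℕ) : ℤ)| ≤ (m : ℤ)

/-- `a_n^{(m)}`: the number of `m`-bounded 132-avoiding permutations of length `n`. -/
noncomputable def aCount (m n : ℕ) : ℕ :=
  Nat.card {π : Equiv.Perm (Fin n) // Avoids132 π ∧ MBounded m π}

/-! Suppose `π k` is at least every entry up to position `k + 1`. An entry `π i` with `i < k` and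
`π i < π (k + 1)` would complete `π k` and `π (k + 1)` to a 132 pattern, so all entries up to
position `k` lie in the interval `(π (k + 1), π k]`. These entries are distinct, and boundedness
leaves at most `m` values in that interval. -/

namespace Avoids132

variable {n : ℕ} {π : Equiv.Perm (Fin n)} {i j k : Fin n}

theorem apply_lt_apply_of_inversion (hA : Avoids132 π) (hik : i ≤ k) (hkj : k < j)
    (hinv : π j < π k) : π j < π i := by
  rcases hik.eq_or_lt with rfl | hik
  · exact hinv
  · have hle : π j ≤ π i := not_lt.1 fun h => hA ⟨i, k, j, hik, hkj, h, hinv⟩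
    exact hle.lt_of_ne (π.injective.ne (hik.trans hkj).ne')

theorem apply_add_lt_apply_of_inversion (hA : Avoids132 π) (hkj : k < j) (hinv : π j < π k)
    (hmax : ∀ i ≤ k, π i ≤ π k) : (π j : ℕ) + k < π k := by
  have hmaps : Set.MapsTo π (Finset.Iic k) (Finset.Ioc (π j) (π k)) := fun i hi =>
    have hik : i ≤ k := Finset.mem_Iic.1 hi
    Finset.mem_Ioc.2 ⟨hA.apply_lt_apply_of_inversion hik hkj hinv, hmax i hik⟩
  have hcard := Finset.card_le_card_of_injOn π hmaps π.injective.injOn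
  rw [Fin.card_Iic, Fin.card_Ioc] at hcard
  omega

end Avoids132

theorem MBounded.apply_le_apply_succ_add {m n : ℕ} {π : Equiv.Perm (Fin n)} (hB : MBounded m π)
    (k : Fin n) (h : (k : ℕ) + 1 < n) : (π k : ℕ) ≤ π ⟨k + 1, h⟩ + m := by
  have hstep := (abs_le.1 (hB k h)).1
  rw [Fin.eta] at hstep
  omega

theorem position_restriction_general {m n : ℕ} {π : Equiv.Perm (Fin n)} (hA : Avoids132 π)
    (hB : MBounded m π) (k : Fin n) (hmax : ∀ i : Fin n, (i : ℕ) ≤ k + 1 → π i ≤ π k)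
    (h : (k : ℕ) + 1 < n) : (k : ℕ) + 1 ≤ m := by
  have hlt : k < ⟨k + 1, h⟩ := Nat.lt_succ_self k
  have hdesc : π ⟨k + 1, h⟩ < π k := (hmax _ le_rfl).lt_of_ne (π.injective.ne hlt.ne')
  have hwide := hA.apply_add_lt_apply_of_inversion hlt hdesc
    fun i hi => hmax i (Nat.le_succ_of_le hi)
  have hnarrow := hB.apply_le_apply_succ_add k h
  omega

theorem position_restriction (m : ℕ) (hm : 1 ≤ m) (n : ℕ) (π : Equiv.Perm (Fin n))
    (hA : Avoids132 π) (hB : MBounded m π) (k : Fin n) (hk : ((π k : Fin n) : ℕ) = n - 1) :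
    ((k : ℕ) + 1 < n → (k : ℕ) + 1 ≤ m) ∧ ((k : ℕ) + 1 ≤ m ∨ (k : ℕ) + 1 = n) := by
  have hpos := position_restriction_general hA hB k fun i _ => Fin.le_def.2 (by omega)
  exact ⟨hpos, (Nat.succ_le_of_lt k.isLt).lt_or_eq.imp_left hpos⟩
end

section
/- Fix m ≥ 1. For every n ≥ 2 and every p, q ∈ B_m, T_{p,q}^{(m)}(n) = Σ_{k=1}^{min(m,n−1)} c_{k,p} · T_{m−k, q−k}^{(m)}(n−k) + T_{p−1, m−1}^{(m)}(n−1), where ∞ − r = ∞ and any term with a negative finite threshold is interpreted as zero. In particular, for n ≥ m+1 the sum runs over 1 ≤ k ≤ m. -/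
/-- Threshold subtraction in `WithTop ℤ`: `∞ - k = ∞`. -/
def wsub (q : WithTop ℤ) (k : ℕ) : WithTop ℤ := WithTop.map (fun z => z - (k : ℤ)) q

/-- `B_m = {0, 1, …, m-1, ∞}` inside `WithTop ℤ`. -/
def Bset (m : ℕ) : Set (WithTop ℤ) :=
  {x | x = ⊤ ∨ ∃ j : ℕ, j < m ∧ x = ((j : ℤ) : WithTop ℤ)}

/-- `T_{u,v}^{(m)}(n)`: the number of `m`-bounded 132-avoiding permutations `π` of length `n`
with endpoint deficiencies `n - π₁ ≤ u` and `n - πₙ ≤ v` (entries are the 1-based values). -/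
noncomputable def Tcount (m : ℕ) (u v : WithTop ℤ) (n : ℕ) : ℕ :=
  Nat.card {π : Equiv.Perm (Fin n) // Avoids132 π ∧ MBounded m π ∧
    (∀ h : 0 < n, (((n : ℤ) - ((((π ⟨0, h⟩ : Fin n) : ℕ) : ℤ) + 1) : ℤ) : WithTop ℤ) ≤ u) ∧
    (∀ h : 0 < n, (((n : ℤ) - ((((π ⟨n - 1, by omega⟩ : Fin n) : ℕ) : ℤ) + 1) : ℤ) : WithTop ℤ) ≤ v)}

/-- `c_{k,p}`: the number of standardized left blocks, i.e. `c_{1,p} = 1` and for `k ≥ 2` the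
number of 132-avoiding `σ` of length `k-1` with `k - σ₁ ≤ p`. -/
noncomputable def ckp (k : ℕ) (p : WithTop ℤ) : ℕ :=
  if h : k ≤ 1 then 1
  else Nat.card {σ : Equiv.Perm (Fin (k - 1)) // Avoids132 σ ∧
    (((k : ℤ) - ((((σ ⟨0, by omega⟩ : Fin (k - 1)) : ℕ) : ℤ) + 1) : ℤ) : WithTop ℤ) ≤ p}

/-!
Cut a 132-avoiding permutation at its maximum. Every entry to the left of the maximum exceeds every
entry to its right, so `π = (σ ⊕ 1) ⊖ τ`: a 132-avoiding block `σ` raised above `τ`, the maximum, and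
a 132-avoiding block `τ`. If `τ` is non-empty, crossing from the maximum to `τ` is a descent of size
`k + (deficiency of τ₁)`, where `k - 1` is the length of `σ`. Requiring it to be at most `m` forces
`k ≤ m`, and then the steps inside `σ ⊕ 1`, whose length is `k`, are automatically small. If `τ` is
empty, the maximum ends the word and `σ` is an arbitrary shorter word whose last entry is close to it.
-/

section FiniteStateRecursion

open Equiv Fin

variable {a b m n : ℕ} {p q : WithTop ℤ}

theorem ncard_eq_sum_ncard_fiber {α β : Type*} [Finite α] [Fintype β] (s : Set α) (f : α → β) :
    s.ncard = ∑ y, {x ∈ s | f x = y}.ncard := by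
  calc s.ncard = Nat.card (Σ y, {x : s // f x = y}) :=
        (Nat.card_congr (sigmaFiberEquiv fun x : s => f x)).symm
    _ = ∑ y, Nat.card {x : s // f x = y} := Nat.card_sigma
    _ = ∑ y, {x ∈ s | f x = y}.ncard := Finset.sum_congr rfl fun y _ =>
        Nat.card_congr (subtypeSubtypeEquivSubtypeInter (· ∈ s) (f · = y))

theorem ncard_eq_sum_ncard_apply_eq_last (s : Set (Perm (Fin (n + 1)))) :
    s.ncard = ∑ i, {π ∈ s | π i = last n}.ncard := by
  rw [ncard_eq_sum_ncard_fiber s fun π => π.symm (last n)]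
  simp only [Equiv.symm_apply_eq, eq_comm (a := last n)]

theorem sum_univ_fin_add_one {M : Type*} [AddCommMonoid M] (f : ℕ → M) (n : ℕ) :
    ∑ i : Fin n, f (i + 1) = ∑ k ∈ Finset.Icc 1 n, f k := by
  rw [Fin.sum_univ_eq_sum_range (fun i => f (i + 1)), Finset.range_eq_Ico, Finset.sum_Ico_add',
    zero_add, Finset.Ico_add_one_right_eq_Icc]

theorem coe_le_wsub {z : ℤ} {k : ℕ} :
    (z : WithTop ℤ) ≤ wsub q k ↔ ((z + k : ℤ) : WithTop ℤ) ≤ q := by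
  cases q with
  | top => simp only [wsub, WithTop.map_top, le_top]
  | coe r => simp only [wsub, WithTop.map_coe, WithTop.coe_le_coe, le_sub_iff_add_le]

theorem nonneg_of_mem_Bset (hp : p ∈ Bset m) : 0 ≤ p := by
  obtain rfl | ⟨j, -, rfl⟩ := hp
  · exact le_top
  · exact WithTop.coe_le_coe.2 j.cast_nonneg

theorem avoids132_iff {π : Perm (Fin n)} :
    Avoids132 π ↔ ∀ i j k, i < j → j < k → π i < π k → π j ≤ π k := by
  simp only [Avoids132, not_exists, not_and, not_lt]

theorem mBounded_iff {π : Perm (Fin n)} :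
    MBounded m π ↔ ∀ i j : Fin n, (j : ℕ) = i + 1 → |((π j : ℕ) : ℤ) - (π i : ℕ)| ≤ m := by
  refine ⟨?_, fun h i hi => h _ _ rfl⟩
  rintro h ⟨i, hi⟩ ⟨_, hj⟩ rfl
  exact h i hj

theorem mBounded_of_le_add_one (h : n ≤ m + 1) (π : Perm (Fin n)) : MBounded m π := by
  rw [mBounded_iff]
  intro i j _
  rw [abs_le]
  omega

/-- The deficiency `n - πᵢ` of an entry of a permutation of length `n`. Since `πᵢ` is the 1-based
value, it is one more than the value in `Fin n`. -/
def deficiency (π : Perm (Fin n)) (i : Fin n) : ℤ := n - ((π i : ℕ) + 1)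

theorem deficiency_nonneg (π : Perm (Fin n)) (i : Fin n) : 0 ≤ deficiency π i := by
  unfold deficiency
  omega

/-- The direct sum `σ ⊕ 1`: the permutation `σ` followed by a new maximum. -/
def appendMax (σ : Perm (Fin n)) : Perm (Fin (n + 1)) :=
  finSuccEquivLast.symm.permCongr σ.optionCongr

section AppendMax

variable (σ : Perm (Fin n))

@[simp]
theorem appendMax_castSucc (i : Fin n) : appendMax σ i.castSucc = (σ i).castSucc := by
  simp [appendMax]

@[simp]
theorem appendMax_last : appendMax σ (last n) = last n := by
  simp [appendMax]

theorem appendMax_injective : Function.Injective (appendMax (n := n)) :=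
  (permCongr _).injective.comp optionCongr_injective

theorem exists_appendMax_eq {π : Perm (Fin (n + 1))} (hπ : π (last n) = last n) :
    ∃ σ, appendMax σ = π := by
  refine ⟨removeNone (finSuccEquivLast.permCongr π), ?_⟩
  rw [appendMax, map_equiv_removeNone]
  ext i
  simp [hπ]

theorem deficiency_appendMax_castSucc (i : Fin n) :
    deficiency (appendMax σ) i.castSucc = deficiency σ i + 1 := by
  simp only [deficiency, appendMax_castSucc, val_castSucc]
  omega

theorem deficiency_appendMax_last : deficiency (appendMax σ) (last n) = 0 := by
  simp [deficiency]

theorem avoids132_appendMax {σ : Perm (Fin n)} : Avoids132 (appendMax σ) ↔ Avoids132 σ := by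
  simp [avoids132_iff, forall_fin_succ', le_last]

theorem mBounded_appendMax {σ : Perm (Fin (n + 1))} :
    MBounded m (appendMax σ) ↔ MBounded m σ ∧ deficiency σ (last n) ≤ m - 1 := by
  constructor
  · intro h
    rw [mBounded_iff] at h ⊢
    refine ⟨fun i j hij => by simpa using h i.castSucc j.castSucc hij, ?_⟩
    have hjunction := h (last n).castSucc (last (n + 1)) rfl
    simp only [appendMax_last, appendMax_castSucc, val_last, val_castSucc, abs_le] at hjunction
    unfold deficiency
    omega
  · rintro ⟨hσ, hjunction⟩
    rw [mBounded_iff] at hσ ⊢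
    intro i j hij
    cases i using lastCases with
    | last => exact absurd hij (by simp only [val_last]; omega)
    | cast i =>
      cases j using lastCases with
      | cast j => simpa using hσ i j hij
      | last =>
        obtain rfl : i = last n := Fin.ext (Nat.succ_injective hij).symm
        simp only [appendMax_last, appendMax_castSucc, val_last, val_castSucc, abs_le]
        unfold deficiency at hjunction
        omega

end AppendMax

/-- Relabelling by positions `inl i ↦ i`, `inr j ↦ a + j` and by values `inl i ↦ b + i`,
`inr j ↦ j`, so that block-diagonal permutations become skew sums. -/
def skewEquiv (a b : ℕ) : Perm (Fin a ⊕ Fin b) ≃ Perm (Fin (a + b)) :=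
  finSumFinEquiv.equivCongr
    ((sumComm _ _).trans (finSumFinEquiv.trans (finCongr (Nat.add_comm b a))))

/-- The skew sum `σ ⊖ τ`: the entries of `σ`, raised above those of `τ`, followed by `τ`. -/
def skewSum (σ : Perm (Fin a)) (τ : Perm (Fin b)) : Perm (Fin (a + b)) :=
  skewEquiv a b (sumCongr σ τ)

section SkewSum

variable (σ : Perm (Fin a)) (τ : Perm (Fin b))

@[simp]
theorem val_skewSum_castAdd (i : Fin a) : (skewSum σ τ (castAdd b i) : ℕ) = b + σ i := by
  simp [skewSum, skewEquiv, add_comm]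

@[simp]
theorem val_skewSum_natAdd (j : Fin b) : (skewSum σ τ (natAdd a j) : ℕ) = τ j := by
  simp [skewSum, skewEquiv]

theorem skewSum_injective2 : Function.Injective2 (skewSum (a := a) (b := b)) :=
  fun _ _ _ _ h => Prod.mk.inj (Perm.sumCongrHom_injective ((skewEquiv a b).injective h))

theorem exists_skewSum_eq {π : Perm (Fin (a + b))}
    (hπ : ∀ i j, π (natAdd a j) < π (castAdd b i)) : ∃ σ τ, skewSum σ τ = π := by
  have le_left (i : Fin a) : b ≤ π (castAdd b i) := by
    have hcard := Finset.card_le_card_of_injOn (s := (Finset.univ : Finset (Fin b)))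
      (t := Finset.Iio (π (castAdd b i))) (fun j => π (natAdd a j))
      (fun j _ => by simpa using hπ i j)
      (π.injective.comp (natAdd_injective b a)).injOn
    simpa using hcard
  obtain ⟨e, rfl⟩ := (skewEquiv a b).surjective π
  have he : e ∈ (Perm.sumCongrHom (Fin a) (Fin b)).range := by
    apply Perm.mem_sumCongrHom_range_of_perm_mapsTo_inl
    rintro _ ⟨i, rfl⟩
    cases hi : e (Sum.inl i) with
    | inl i' => exact Set.mem_range_self i'
    | inr j =>
      have hj := le_left i
      exact absurd hj (by simp [skewEquiv, hi])
  obtain ⟨⟨σ, τ⟩, rfl⟩ := he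
  exact ⟨σ, τ, rfl⟩

theorem deficiency_skewSum_castAdd (i : Fin a) :
    deficiency (skewSum σ τ) (castAdd b i) = deficiency σ i := by
  simp only [deficiency, val_skewSum_castAdd]
  omega

theorem deficiency_skewSum_natAdd (j : Fin b) :
    deficiency (skewSum σ τ) (natAdd a j) = deficiency τ j + a := by
  simp only [deficiency, val_skewSum_natAdd]
  omega

theorem avoids132_skewSum {σ : Perm (Fin a)} {τ : Perm (Fin b)} :
    Avoids132 (skewSum σ τ) ↔ Avoids132 σ ∧ Avoids132 τ := by
  -- Entries of `σ` exceed those of `τ`, so an ascent, and with it a pattern 132, lies in one block.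
  simp only [avoids132_iff, forall_fin_add, ← val_fin_lt, ← val_fin_le, val_skewSum_castAdd,
    val_skewSum_natAdd, val_castAdd, val_natAdd]
  grind

theorem mBounded_skewSum {σ : Perm (Fin (a + 1))} {τ : Perm (Fin (b + 1))} :
    MBounded m (skewSum σ τ) ↔ MBounded m σ ∧ MBounded m τ ∧
      a + 1 + deficiency τ 0 - deficiency σ (last a) ≤ m := by
  have hjunction : |((skewSum σ τ (natAdd (a + 1) 0) : ℕ) : ℤ) -
      (skewSum σ τ (castAdd (b + 1) (last a)) : ℕ)| ≤ m ↔
        a + 1 + deficiency τ 0 - deficiency σ (last a) ≤ m := by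
    simp only [val_skewSum_natAdd, val_skewSum_castAdd, deficiency, abs_le]
    omega
  rw [← hjunction]
  simp only [mBounded_iff]
  constructor
  · intro h
    refine ⟨fun i j hij => ?_, fun i j hij => ?_, h _ _ rfl⟩
    · simpa using h (castAdd (b + 1) i) (castAdd (b + 1) j) hij
    · simpa using h (natAdd (a + 1) i) (natAdd (a + 1) j) (by simp [hij, add_assoc])
  · rintro ⟨hσ, hτ, hστ⟩ i j hij
    cases i using addCases with
    | left i =>
      cases j using addCases with
      | left j => simpa using hσ i j hij
      | right j =>
        rw [val_natAdd, val_castAdd] at hij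
        obtain rfl : i = last a := by ext; rw [val_last]; omega
        obtain rfl : j = 0 := by ext; rw [val_last] at hij; rw [val_zero]; omega
        exact hστ
    | right i =>
      cases j using addCases with
      | left j => exact absurd hij (by simp only [val_natAdd, val_castAdd]; omega)
      | right j =>
        simpa using hτ i j (by simp only [val_natAdd] at hij; omega)

end SkewSum

theorem right_lt_left_of_avoids132 {π : Perm (Fin (a + 1 + b))} (hπ : Avoids132 π)
    (hmax : ∀ i, π i ≤ π (castAdd b (last a))) (i : Fin (a + 1)) (j : Fin b) :
    π (natAdd (a + 1) j) < π (castAdd b i) := by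
  have left_lt_right (i : Fin (a + 1)) : castAdd b i < natAdd (a + 1) j := by
    rw [Fin.lt_def, val_castAdd, val_natAdd]
    omega
  have ne (i : Fin (a + 1)) : π (castAdd b i) ≠ π (natAdd (a + 1) j) :=
    π.injective.ne (left_lt_right i).ne
  by_contra! hij
  obtain rfl | hi := eq_or_ne i (last a)
  · exact ne _ (hij.antisymm (hmax _))
  · have hi' : castAdd b i < castAdd b (last a) := lt_last_iff_ne_last.2 hi
    have hle := avoids132_iff.1 hπ _ _ _ hi' (left_lt_right _) (hij.lt_of_ne (ne i))
    exact ne _ (hle.antisymm (hmax _))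

theorem exists_skewSum_appendMax_eq {π : Perm (Fin (a + 1 + b))} (hπ : Avoids132 π)
    (hmax : ∀ i, π i ≤ π (castAdd b (last a))) : ∃ σ τ, skewSum (appendMax σ) τ = π := by
  obtain ⟨ρ, τ, rfl⟩ := exists_skewSum_eq (right_lt_left_of_avoids132 hπ hmax)
  obtain ⟨σ, rfl⟩ : ∃ σ, appendMax σ = ρ := by
    refine exists_appendMax_eq (last_le_iff.1 ?_)
    have h := hmax (castAdd b (ρ.symm (last a)))
    simpa [Fin.le_def] using h
  exact ⟨σ, τ, rfl⟩

/-- The set of permutations of length `n + 1` counted by `T_{p,q}^{(m)}(n + 1)`. -/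
def boundedAvoiders (m : ℕ) (p q : WithTop ℤ) (n : ℕ) : Set (Perm (Fin (n + 1))) :=
  {π | Avoids132 π ∧ MBounded m π ∧ deficiency π 0 ≤ p ∧ deficiency π (last n) ≤ q}

theorem mem_boundedAvoiders {π : Perm (Fin (n + 1))} : π ∈ boundedAvoiders m p q n ↔
    Avoids132 π ∧ MBounded m π ∧ deficiency π 0 ≤ p ∧ deficiency π (last n) ≤ q := Iff.rfl

theorem Tcount_succ : Tcount m p q (n + 1) = (boundedAvoiders m p q n).ncard := by
  refine Nat.card_congr (Equiv.subtypeEquivRight fun π => ?_)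
  rw [forall_prop_of_true n.succ_pos, forall_prop_of_true n.succ_pos]
  rfl

theorem Tcount_eq_zero_of_neg (hn : 0 < n) (hp : p < 0) : Tcount m p q n = 0 := by
  obtain ⟨n, rfl⟩ := Nat.exists_eq_add_one.2 hn
  rw [Tcount_succ, Set.ncard_eq_zero, Set.eq_empty_iff_forall_notMem]
  rintro π ⟨-, -, hπ, -⟩
  exact (hπ.trans_lt hp).not_ge (WithTop.coe_le_coe.2 (deficiency_nonneg π 0))

/-- The permutations `σ` that can stand to the left of the maximum in a 132-avoiding permutation of
first deficiency at most `p`. Measuring that deficiency on `σ ⊕ 1` covers the empty block too. -/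
def leftBlocks (p : WithTop ℤ) (a : ℕ) : Set (Perm (Fin a)) :=
  {σ | Avoids132 σ ∧ deficiency (appendMax σ) 0 ≤ p}

theorem mem_leftBlocks {σ : Perm (Fin a)} :
    σ ∈ leftBlocks p a ↔ Avoids132 σ ∧ deficiency (appendMax σ) 0 ≤ p := Iff.rfl

theorem ckp_succ (hp : 0 ≤ p) : ckp (a + 1) p = (leftBlocks p a).ncard := by
  cases a with
  | zero =>
    have huniv : leftBlocks p 0 = Set.univ := by
      refine Set.eq_univ_of_forall fun σ => ⟨avoids132_iff.2 fun i => i.elim0, ?_⟩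
      rwa [← Fin.last_zero, deficiency_appendMax_last]
    simp [ckp, huniv, Set.ncard_univ]
  | succ a =>
    rw [ckp, dif_neg (by omega)]
    refine Nat.card_congr (Equiv.subtypeEquivRight fun σ : Perm (Fin (a + 1)) => ?_)
    have hfirst : deficiency (appendMax σ) 0 = (a + 1 + 1 : ℕ) - ((σ 0 : ℕ) + 1) := by
      rw [← castSucc_zero, deficiency, appendMax_castSucc, val_castSucc]
    rw [mem_leftBlocks, hfirst]
    rfl

theorem appendMax_mem_boundedAvoiders {σ : Perm (Fin (n + 1))} (hq : 0 ≤ q) :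
    appendMax σ ∈ boundedAvoiders m p q (n + 1) ↔
      σ ∈ boundedAvoiders m (wsub p 1) ((m - 1 : ℤ) : WithTop ℤ) n := by
  simp only [mem_boundedAvoiders, avoids132_appendMax, mBounded_appendMax,
    deficiency_appendMax_last, ← castSucc_zero, deficiency_appendMax_castSucc, coe_le_wsub,
    WithTop.coe_le_coe, Nat.cast_one, WithTop.coe_zero, hq]
  tauto

theorem skewSum_appendMax_mem_boundedAvoiders {σ : Perm (Fin a)} {τ : Perm (Fin (b + 1))} :
    skewSum (appendMax σ) τ ∈ boundedAvoiders m p q (a + 1 + b) ↔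
      σ ∈ leftBlocks p a ∧
        τ ∈ boundedAvoiders m ((m - (a + 1 : ℕ) : ℤ) : WithTop ℤ) (wsub q (a + 1)) b := by
  have hfirst : deficiency (skewSum (appendMax σ) τ) 0 = deficiency (appendMax σ) 0 :=
    deficiency_skewSum_castAdd (appendMax σ) τ 0
  have hlast : deficiency (skewSum (appendMax σ) τ) (last (a + 1 + b)) =
      deficiency τ (last b) + (a + 1 : ℕ) :=
    deficiency_skewSum_natAdd (appendMax σ) τ (last b)
  have hbounded : MBounded m (skewSum (appendMax σ) τ) ↔
      MBounded m τ ∧ deficiency τ 0 ≤ m - (a + 1 : ℕ) := by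
    rw [mBounded_skewSum, deficiency_appendMax_last]
    have hτ := deficiency_nonneg τ 0
    constructor
    · rintro ⟨-, hτm, hjunction⟩
      exact ⟨hτm, by omega⟩
    · rintro ⟨hτm, hjunction⟩
      exact ⟨mBounded_of_le_add_one (by omega) _, hτm, by omega⟩
  have hmem : skewSum (appendMax σ) τ ∈ boundedAvoiders m p q (a + 1 + b) ↔
      Avoids132 (skewSum (appendMax σ) τ) ∧ MBounded m (skewSum (appendMax σ) τ) ∧
        deficiency (skewSum (appendMax σ) τ) 0 ≤ p ∧
          deficiency (skewSum (appendMax σ) τ) (last (a + 1 + b)) ≤ q := Iff.rfl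
  rw [hmem, hfirst, hlast, hbounded, avoids132_skewSum, avoids132_appendMax, mem_leftBlocks,
    mem_boundedAvoiders, coe_le_wsub, WithTop.coe_le_coe]
  tauto

theorem image_appendMax_boundedAvoiders (hq : 0 ≤ q) :
    appendMax '' boundedAvoiders m (wsub p 1) ((m - 1 : ℤ) : WithTop ℤ) n =
      {π ∈ boundedAvoiders m p q (n + 1) | π (last (n + 1)) = last (n + 1)} := by
  ext π
  constructor
  · rintro ⟨σ, hσ, rfl⟩
    exact ⟨(appendMax_mem_boundedAvoiders hq).2 hσ, appendMax_last σ⟩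
  · rintro ⟨hπ, hmax⟩
    obtain ⟨σ, rfl⟩ := exists_appendMax_eq hmax
    exact ⟨σ, (appendMax_mem_boundedAvoiders hq).1 hπ, rfl⟩

theorem image_skewSum_appendMax_boundedAvoiders :
    (fun x : Perm (Fin a) × Perm (Fin (b + 1)) => skewSum (appendMax x.1) x.2) ''
        (leftBlocks p a ×ˢ
          boundedAvoiders m ((m - (a + 1 : ℕ) : ℤ) : WithTop ℤ) (wsub q (a + 1)) b) =
      {π ∈ boundedAvoiders m p q (a + 1 + b) |
        π (castAdd (b + 1) (last a)) = last (a + 1 + b)} := by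
  apply Set.Subset.antisymm
  · rintro _ ⟨⟨σ, τ⟩, hx, rfl⟩
    refine ⟨skewSum_appendMax_mem_boundedAvoiders.2 hx, Fin.ext ?_⟩
    calc (skewSum (appendMax σ) τ (castAdd (b + 1) (last a)) : ℕ) = b + 1 + a := by
          rw [val_skewSum_castAdd, appendMax_last, val_last]
      _ = a + 1 + b := by omega
  · rintro π ⟨hπ, hmax⟩
    obtain ⟨σ, τ, rfl⟩ := exists_skewSum_appendMax_eq hπ.1 fun i => hmax ▸ le_last (π i)
    exact ⟨(σ, τ), skewSum_appendMax_mem_boundedAvoiders.1 hπ, rfl⟩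

theorem ncard_boundedAvoiders_last_eq_max (hq : 0 ≤ q) :
    {π ∈ boundedAvoiders m p q (n + 1) | π (last (n + 1)) = last (n + 1)}.ncard =
      Tcount m (wsub p 1) ((m - 1 : ℤ) : WithTop ℤ) (n + 1) := by
  rw [Tcount_succ, ← image_appendMax_boundedAvoiders hq,
    Set.ncard_image_of_injective _ appendMax_injective]

theorem ncard_boundedAvoiders_castAdd_eq_max (hp : 0 ≤ p) :
    {π ∈ boundedAvoiders m p q (a + 1 + b) |
        π (castAdd (b + 1) (last a)) = last (a + 1 + b)}.ncard =
      ckp (a + 1) p *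
        Tcount m ((m - (a + 1 : ℕ) : ℤ) : WithTop ℤ) (wsub q (a + 1)) (b + 1) := by
  have hinj : Function.Injective fun x : Perm (Fin a) × Perm (Fin (b + 1)) =>
      skewSum (appendMax x.1) x.2 := fun x y hxy => by
    obtain ⟨hleft, hright⟩ := skewSum_injective2 hxy
    exact Prod.ext (appendMax_injective hleft) hright
  rw [ckp_succ hp, Tcount_succ, ← Set.ncard_prod, ← Set.ncard_image_of_injective _ hinj,
    image_skewSum_appendMax_boundedAvoiders]

theorem ncard_boundedAvoiders_castSucc_eq_max (hp : 0 ≤ p) (i : Fin n) :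
    {π ∈ boundedAvoiders m p q n | π i.castSucc = last n}.ncard =
      ckp (i + 1) p *
        Tcount m ((m - (i + 1 : ℕ) : ℤ) : WithTop ℤ) (wsub q (i + 1)) (n + 1 - (i + 1)) := by
  obtain ⟨a, ha⟩ := i
  obtain ⟨b, rfl⟩ : ∃ b, n = a + 1 + b := Nat.exists_eq_add_of_le ha
  have hlength : a + 1 + b + 1 - (a + 1) = b + 1 := by omega
  rw [hlength]
  exact ncard_boundedAvoiders_castAdd_eq_max hp

theorem Tcount_eq_sum_Icc (hn : 2 ≤ n) (hp : 0 ≤ p) (hq : 0 ≤ q) :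
    Tcount m p q n =
      (∑ k ∈ Finset.Icc 1 (n - 1),
        ckp k p * Tcount m ((m - k : ℤ) : WithTop ℤ) (wsub q k) (n - k))
      + Tcount m (wsub p 1) ((m - 1 : ℤ) : WithTop ℤ) (n - 1) := by
  obtain ⟨n, rfl⟩ := Nat.exists_eq_add_of_le' hn
  rw [Tcount_succ, ncard_eq_sum_ncard_apply_eq_last, Fin.sum_univ_castSucc,
    ncard_boundedAvoiders_last_eq_max hq, show n + 2 - 1 = n + 1 from rfl, ← sum_univ_fin_add_one]
  simp only [ncard_boundedAvoiders_castSucc_eq_max hp]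

theorem finite_state_recursion_general (hn : 2 ≤ n) (hp : 0 ≤ p) (hq : 0 ≤ q) :
    Tcount m p q n =
      (∑ k ∈ Finset.Icc 1 (min m (n - 1)),
        ckp k p * Tcount m ((m - k : ℤ) : WithTop ℤ) (wsub q k) (n - k))
      + Tcount m (wsub p 1) ((m - 1 : ℤ) : WithTop ℤ) (n - 1) := by
  rw [Tcount_eq_sum_Icc hn hp hq]
  congr 1
  symm
  refine Finset.sum_subset (Finset.Icc_subset_Icc_right (min_le_right _ _)) fun k hk hk' => ?_
  rw [Finset.mem_Icc] at hk hk'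
  have hthreshold : ((m - k : ℤ) : WithTop ℤ) < 0 := WithTop.coe_lt_coe.2 (by omega)
  rw [Tcount_eq_zero_of_neg (by omega) hthreshold, mul_zero]

end FiniteStateRecursion

theorem finite_state_recursion (m : ℕ) (hm : 1 ≤ m) (n : ℕ) (hn : 2 ≤ n)
    (p q : WithTop ℤ) (hp : p ∈ Bset m) (hq : q ∈ Bset m) :
    Tcount m p q n =
      (∑ k ∈ Finset.Icc 1 (min m (n - 1)),
        ckp k p * Tcount m ((((m : ℤ) - (k : ℤ)) : ℤ) : WithTop ℤ) (wsub q k) (n - k))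
      + Tcount m (wsub p 1) ((((m : ℤ) - 1) : ℤ) : WithTop ℤ) (n - 1) ∧
    (m + 1 ≤ n →
      Tcount m p q n =
        (∑ k ∈ Finset.Icc 1 m,
          ckp k p * Tcount m ((((m : ℤ) - (k : ℤ)) : ℤ) : WithTop ℤ) (wsub q k) (n - k))
        + Tcount m (wsub p 1) ((((m : ℤ) - 1) : ℤ) : WithTop ℤ) (n - 1)) := by
  have h := finite_state_recursion_general (m := m) hn
    (nonneg_of_mem_Bset hp) (nonneg_of_mem_Bset hq)
  exact ⟨h, fun hmn => by rwa [min_eq_left (by omega)] at h⟩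
end

section
/- For every fixed m ≥ 1, the ordinary generating function A^{(m)}(x) = Σ_{n≥0} a_n^{(m)} x^n is a rational function of x: there exist polynomials P(x), Q(x) with rational coefficients and Q(0) ≠ 0 such that Q(x) · Σ_{n≥0} a_n^{(m)} x^n = P(x) as formal power series over ℚ. -/
/-- The ordinary generating function `A^{(m)}(x) = Σ a_n^{(m)} x^n` over `ℚ`. -/
noncomputable def Aps (m : ℕ) : PowerSeries ℚ := PowerSeries.mk (fun n => (aCount m n : ℚ))

/-!
Cutting a nonempty 132-avoiding permutation at its maximum `n` writes it uniquely as `L' n R`, where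
all values of `L'` exceed those of `R` and the two sides are arbitrary smaller 132-avoiders. If `R`
is nonempty, its first entry lies more than `|L'|` below `n`, so `|L'| ≤ m` in the `m`-bounded case.
Hence every bounded permutation grows from the empty one by two kinds of moves: append a new
maximum, or put a short prefix and a new maximum in front. There are finitely many moves, and
whether one preserves boundedness depends only on the gaps between the outer entries and the next
value, truncated at `m + 1`. The generating functions by state therefore satisfy a finite linear
system with matrix `1 - M`, where `M` has polynomial entries divisible by `x`, and Cramer's rule
gives the denominator `det (1 - M)`, whose constant term is `1`.
-/

open scoped Polynomial PowerSeries

section LinearSystem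

open Matrix

variable {R S : Type*} [CommRing R] [Fintype S]

theorem map_det_mul_eq_map_cramer [DecidableEq S] {R' : Type*} [CommRing R'] (φ : R →+* R')
    (N : Matrix S S R) (b : S → R) (x : S → R') (hx : N.map φ *ᵥ x = φ ∘ b) (s : S) :
    φ N.det * x s = φ (N.cramer b s) := by
  have h : (N.map φ).adjugate *ᵥ (N.map φ *ᵥ x) = φ N.det • x := by
    rw [mulVec_mulVec, adjugate_mul, smul_mulVec, one_mulVec, RingHom.map_det,
      RingHom.mapMatrix_apply]
  rw [cramer_eq_adjugate_mulVec, RingHom.map_mulVec, ← RingHom.mapMatrix_apply,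
    RingHom.map_adjugate, RingHom.mapMatrix_apply, ← hx, h, Pi.smul_apply, smul_eq_mul]

theorem coeff_zero_det_one_sub [DecidableEq S] (M : Matrix S S R[X])
    (hM : ∀ s t, (M s t).coeff 0 = 0) : (1 - M).det.coeff 0 = 1 := by
  have h : (Polynomial.constantCoeff (R := R)).mapMatrix M = 0 := by
    ext s t
    exact hM s t
  rw [← Polynomial.constantCoeff_apply, RingHom.map_det, map_sub, h, map_one, sub_zero, det_one]

theorem exists_polynomial_mul_eq_of_linear_system (M : Matrix S S R[X])
    (hM : ∀ s t, (M s t).coeff 0 = 0) (b : S → R[X]) (A : S → R⟦X⟧)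
    (hA : ∀ s, A s = b s + ∑ t, (M s t : R⟦X⟧) * A t) :
    ∃ Q : R[X], Q.coeff 0 = 1 ∧ ∀ s, ∃ P : R[X], (Q : R⟦X⟧) * A s = P := by
  classical
  let φ : R[X] →+* R⟦X⟧ := Polynomial.coeToPowerSeries.ringHom
  have hN : (1 - M).map φ *ᵥ A = φ ∘ b := by
    rw [← RingHom.mapMatrix_apply, map_sub, map_one, sub_mulVec, one_mulVec, sub_eq_iff_eq_add]
    exact funext hA
  exact ⟨(1 - M).det, coeff_zero_det_one_sub M hM,
    fun s => ⟨(1 - M).cramer b s, map_det_mul_eq_map_cramer φ _ b A hN s⟩⟩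

end LinearSystem

/-- A set of objects, each built from `root` by applying letters `a : Λ` one after the other, where
the admissibility of a letter and its effect on the state depend only on the current state in `S`,
and where every object arises in only one way. Generating functions of such objects are computed by
the transfer-matrix method. -/
structure TransferSystem (T Λ S : Type*) where
  carrier : Set T
  root : T
  size : T → ℕ
  state : T → S
  step : Λ → T → T
  cost : Λ → ℕ
  allowed : Λ → S → Prop
  next : Λ → S → S
  mem_carrier_iff (t : T) :
    t ∈ carrier ↔ t = root ∨ ∃ a, ∃ u ∈ carrier, allowed a (state u) ∧ step a u = t
  step_inj {a b : Λ} {u v : T} (hu : u ∈ carrier) (hv : v ∈ carrier)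
    (ha : allowed a (state u)) (hb : allowed b (state v)) (h : step a u = step b v) :
    a = b ∧ u = v
  state_step {a : Λ} {u : T} (hu : u ∈ carrier) (ha : allowed a (state u)) :
    state (step a u) = next a (state u)
  size_root : size root = 0
  size_step (a : Λ) (u : T) : size (step a u) = size u + cost a
  cost_pos (a : Λ) : 0 < cost a

namespace TransferSystem

variable {T Λ S : Type*} (D : TransferSystem T Λ S)

/-- The objects of size `n` in state `s`. -/
def level (s : S) (n : ℕ) : Set T := {t ∈ D.carrier | D.state t = s ∧ D.size t = n}

/-- The transitions with target `s` and cost at most `n`, as pairs (letter, source state). -/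
def transitionsTo (s : S) (n : ℕ) : Set (Λ × S) :=
  {e | D.allowed e.1 e.2 ∧ D.next e.1 e.2 = s ∧ D.cost e.1 ≤ n}

theorem finite_setOf_size_eq [Finite Λ] (n : ℕ) : {t ∈ D.carrier | D.size t = n}.Finite := by
  induction n using Nat.strong_induction_on with
  | _ n ih =>
    have hfin (a : Λ) : {u ∈ D.carrier | D.size u + D.cost a = n}.Finite := by
      by_cases ha : D.cost a ≤ n
      · exact (ih (n - D.cost a) (by have := D.cost_pos a; lia)).subset fun u hu =>
          ⟨hu.1, by have := hu.2; lia⟩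
      · exact Set.finite_empty.subset fun u hu => ha (by have := hu.2; lia)
    refine ((Set.finite_singleton D.root).union
      (Set.finite_iUnion fun a => (hfin a).image (D.step a))).subset ?_
    rintro t ⟨ht, rfl⟩
    rcases (D.mem_carrier_iff t).1 ht with rfl | ⟨a, u, hu, -, rfl⟩
    · exact Or.inl rfl
    · exact Or.inr (Set.mem_iUnion.2 ⟨a, u, ⟨hu, (D.size_step a u).symm⟩, rfl⟩)

theorem finite_level [Finite Λ] (s : S) (n : ℕ) : (D.level s n).Finite :=
  (D.finite_setOf_size_eq n).subset fun _ ht => ⟨ht.1, ht.2.2⟩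

theorem level_zero (s : S) : D.level s 0 = {t | t = D.root ∧ D.state D.root = s} := by
  ext t
  constructor
  · rintro ⟨ht, hs, hn⟩
    rcases (D.mem_carrier_iff t).1 ht with rfl | ⟨a, u, -, -, rfl⟩
    · exact ⟨rfl, hs⟩
    · have := D.size_step a u
      have := D.cost_pos a
      lia
  · rintro ⟨rfl, hs⟩
    exact ⟨(D.mem_carrier_iff _).2 (Or.inl rfl), hs, D.size_root⟩

theorem level_of_pos (s : S) {n : ℕ} (hn : 0 < n) :
    D.level s n = ⋃ e ∈ D.transitionsTo s n, D.step e.1 '' D.level e.2 (n - D.cost e.1) := by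
  ext t
  simp only [Set.mem_iUnion]
  constructor
  · rintro ⟨ht, rfl, rfl⟩
    rcases (D.mem_carrier_iff t).1 ht with rfl | ⟨a, u, hu, ha, rfl⟩
    · simp [D.size_root] at hn
    · have hsize := D.size_step a u
      exact ⟨(a, D.state u), ⟨ha, (D.state_step hu ha).symm, by lia⟩,
        u, ⟨hu, rfl, by lia⟩, rfl⟩
  · rintro ⟨⟨a, _⟩, ⟨ha, hs, hle⟩, u, ⟨hu, rfl, hsize⟩, rfl⟩
    refine ⟨(D.mem_carrier_iff _).2 (Or.inr ⟨a, u, hu, ha, rfl⟩), ?_, ?_⟩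
    · rw [D.state_step hu ha, hs]
    · rw [D.size_step, hsize, Nat.sub_add_cancel hle]

theorem pairwiseDisjoint_image_level (s : S) (n : ℕ) :
    (D.transitionsTo s n).PairwiseDisjoint
      fun e => D.step e.1 '' D.level e.2 (n - D.cost e.1) := by
  rintro ⟨a, _⟩ ⟨ha, -⟩ ⟨b, _⟩ ⟨hb, -⟩ hne
  refine Set.disjoint_left.2 ?_
  rintro _ ⟨u, ⟨hu, rfl, -⟩, rfl⟩ ⟨v, ⟨hv, rfl, -⟩, heq⟩
  obtain ⟨rfl, rfl⟩ := D.step_inj hv hu hb ha heq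
  exact hne rfl

theorem ncard_image_level {a : Λ} {s : S} (ha : D.allowed a s) (n : ℕ) :
    (D.step a '' D.level s n).ncard = (D.level s n).ncard := by
  refine Set.InjOn.ncard_image ?_
  rintro u ⟨hu, rfl, -⟩ v ⟨hv, hs, -⟩ heq
  exact (D.step_inj hu hv ha (hs ▸ ha) heq).2

open Classical in
theorem ncard_level_of_pos [Fintype Λ] [Fintype S] (s : S) {n : ℕ} (hn : 0 < n) :
    (D.level s n).ncard = ∑ t, ∑ a, if D.allowed a t ∧ D.next a t = s then
      if D.cost a ≤ n then (D.level t (n - D.cost a)).ncard else 0 else 0 := by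
  rw [D.level_of_pos s hn, (Set.toFinite _).ncard_biUnion
    (fun e _ => (D.finite_level _ _).image _) (D.pairwiseDisjoint_image_level s n),
    finsum_mem_congr rfl fun e he => D.ncard_image_level he.1 _,
    finsum_mem_def, finsum_eq_sum_of_fintype, Fintype.sum_prod_type_right]
  simp only [Set.indicator_apply, transitionsTo, Set.mem_ofPred_eq, ← ite_and, and_assoc]

section GenFun

variable (R : Type*) [CommSemiring R]

/-- The generating function, by size, of the objects in state `s`. -/
noncomputable def stateGenFun (s : S) : R⟦X⟧ := PowerSeries.mk fun n => ((D.level s n).ncard : R)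

/-- The generating function, by size, of all objects. -/
noncomputable def genFun : R⟦X⟧ :=
  PowerSeries.mk fun n => ({t ∈ D.carrier | D.size t = n}.ncard : R)

open Classical in
/-- The transfer matrix: the entry `(s, t)` enumerates by cost the transitions from `t` to `s`. -/
noncomputable def transferMatrix [Fintype Λ] : Matrix S S R[X] :=
  fun s t => ∑ a, if D.allowed a t ∧ D.next a t = s then Polynomial.X ^ D.cost a else 0

theorem coeff_zero_transferMatrix [Fintype Λ] (s t : S) : (D.transferMatrix R s t).coeff 0 = 0 := by
  classical
  simp only [transferMatrix, Polynomial.finsetSum_coeff]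
  refine Finset.sum_eq_zero fun a _ => ?_
  split_ifs <;> simp [Polynomial.coeff_X_pow, (D.cost_pos a).ne]

open Classical in
theorem stateGenFun_eq [Fintype Λ] [Fintype S] (s : S) :
    D.stateGenFun R s = (Polynomial.C (if D.state D.root = s then 1 else 0) : R[X]) +
      ∑ t, (D.transferMatrix R s t : R⟦X⟧) * D.stateGenFun R t := by
  have coe_entry (t : S) : (D.transferMatrix R s t : R⟦X⟧) =
      ∑ a, if D.allowed a t ∧ D.next a t = s then PowerSeries.X ^ D.cost a else 0 := by
    rw [transferMatrix, ← Polynomial.coeToPowerSeries.ringHom_apply, map_sum]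
    exact Finset.sum_congr rfl fun a _ => by split_ifs <;> simp
  ext n
  rcases Nat.eq_zero_or_pos n with rfl | hn
  · have h (t : S) : PowerSeries.constantCoeff (D.transferMatrix R s t : R⟦X⟧) = 0 := by
      simp [D.coeff_zero_transferMatrix]
    by_cases hs : D.state D.root = s <;>
      simp [stateGenFun, level_zero, hs, h]
  · simp only [stateGenFun, coe_entry, Finset.sum_mul, ite_mul, zero_mul, map_add, map_sum,
      PowerSeries.coeff_mk, D.ncard_level_of_pos s hn, Polynomial.coeff_coe,
      Polynomial.coeff_C_of_ne_zero hn.ne', zero_add, Nat.cast_sum, Nat.cast_ite, Nat.cast_zero,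
      apply_ite (PowerSeries.coeff n), PowerSeries.coeff_X_pow_mul', map_zero]

theorem genFun_eq_sum [Finite Λ] [Fintype S] : D.genFun R = ∑ s, D.stateGenFun R s := by
  ext n
  have hunion : {t ∈ D.carrier | D.size t = n} = ⋃ s, D.level s n := by
    ext t
    simp [level]
  have hdisj : Pairwise (Function.onFun Disjoint fun s => D.level s n) := fun s s' hne =>
    Set.disjoint_left.2 fun t ht ht' => hne (ht.2.1.symm.trans ht'.2.1)
  simp only [genFun, stateGenFun, map_sum, PowerSeries.coeff_mk, hunion,
    Set.ncard_iUnion_of_finite (fun s => D.finite_level s n) hdisj, finsum_eq_sum_of_fintype,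
    Nat.cast_sum]

end GenFun

theorem exists_polynomial_mul_genFun_eq (R : Type*) [CommRing R] [Finite Λ] [Finite S] :
    ∃ P Q : R[X], Q.coeff 0 = 1 ∧ (Q : R⟦X⟧) * D.genFun R = P := by
  classical
  have := Fintype.ofFinite Λ
  have := Fintype.ofFinite S
  obtain ⟨Q, hQ, hP⟩ := exists_polynomial_mul_eq_of_linear_system (D.transferMatrix R)
    (D.coeff_zero_transferMatrix R) _ (D.stateGenFun R) (D.stateGenFun_eq R)
  choose P hP using hP
  refine ⟨∑ s, P s, Q, hQ, ?_⟩
  rw [D.genFun_eq_sum, Finset.mul_sum, Finset.sum_congr rfl fun s _ => hP s]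
  exact (map_sum Polynomial.coeToPowerSeries.ringHom P Finset.univ).symm

end TransferSystem

section Words

open List

/-- One-line notations of permutations, with the values `0, …, n - 1` where the paper has
`1, …, n`. -/
def IsPermWord (w : List ℕ) : Prop := w ~ range w.length

/-- Avoidance of the pattern 132, for words in one-line notation. -/
def WordAvoids132 (w : List ℕ) : Prop := w.Triplewise fun a b c => ¬(a < c ∧ c < b)

/-- The condition `|π_{i+1} − π_i| ≤ m`, for words in one-line notation. -/
def WordMBounded (m : ℕ) (w : List ℕ) : Prop := w.IsChain fun a b : ℕ => |(b : ℤ) - a| ≤ m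

/-- The word `L' n R`, where `n` is the new maximum and `L'` is `L` shifted above the values of `R`,
the only relative position of the two sides of the maximum that avoids 132. -/
def joinAtMax (L R : List ℕ) : List ℕ :=
  L.map (R.length + ·) ++ (R.length + L.length) :: R

/-- How far the first entry lies below `w.length`, the value of a maximum placed in front of `w`.
For one-line notations it is `0` only for the empty word. -/
def firstGap (w : List ℕ) : ℕ := w.length - w.headD 0

/-- How far the last entry lies below `w.length`, the value of a maximum placed after `w`.
For one-line notations it is `0` only for the empty word. -/
def lastGap (w : List ℕ) : ℕ := w.length - w.getLastD 0

theorem length_joinAtMax (L R : List ℕ) :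
    (joinAtMax L R).length = R.length + (L.length + 1) := by
  simp only [joinAtMax, length_append, length_map, length_cons]
  lia

namespace IsPermWord

variable {w : List ℕ}

theorem nil : IsPermWord [] := Perm.refl _

theorem mem_iff (hw : IsPermWord w) {x : ℕ} : x ∈ w ↔ x < w.length := by
  rw [Perm.mem_iff hw, mem_range]

end IsPermWord

theorem isPermWord_joinAtMax {L R : List ℕ} (hL : IsPermWord L) (hR : IsPermWord R) :
    IsPermWord (joinAtMax L R) := by
  rw [IsPermWord, length_joinAtMax, range_add, range_succ, map_append, ← append_assoc]
  calc L.map (R.length + ·) ++ (R.length + L.length) :: R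
      ~ (R ++ L.map (R.length + ·)) ++ [R.length + L.length] := by
        rw [append_cons]
        exact perm_append_comm.trans (by simp)
    _ ~ (range R.length ++ (range L.length).map (R.length + ·)) ++ [R.length + L.length] :=
      (hR.append (hL.map _)).append_right _

theorem joinAtMax_inj {L R L' R' : List ℕ} (hL : IsPermWord L) (hR : IsPermWord R)
    (h : joinAtMax L R = joinAtMax L' R') : L = L' ∧ R = R' := by
  have hlen := congrArg length h
  simp only [length_joinAtMax] at hlen
  rw [joinAtMax, joinAtMax, append_cons_inj_of_notMem] at h
  · obtain ⟨hmap, -, rfl⟩ := h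
    exact ⟨map_injective_iff.2 (add_right_injective _) hmap, rfl⟩
  · simp only [mem_map, hL.mem_iff]
    lia
  · rw [hR.mem_iff]
    lia

theorem wordAvoids132_joinAtMax_iff {L R : List ℕ} (hL : IsPermWord L) (hR : IsPermWord R) :
    WordAvoids132 (joinAtMax L R) ↔ WordAvoids132 L ∧ WordAvoids132 R := by
  have after_max : R.Pairwise fun b c => ¬(R.length + L.length < c ∧ c < b) :=
    pairwise_of_forall_mem_list fun b _ c hc => by
      have := hR.mem_iff.1 hc
      lia
  have across_max : ∀ a ∈ L.map (R.length + ·),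
      ((R.length + L.length) :: R).Pairwise fun b c => ¬(a < c ∧ c < b) := by
    simp only [forall_mem_map, pairwise_cons]
    exact fun a _ => ⟨fun c hc => by have := hR.mem_iff.1 hc; lia,
      pairwise_of_forall_mem_list fun b _ c hc => by have := hR.mem_iff.1 hc; lia⟩
  have before_max : ∀ c ∈ (R.length + L.length) :: R,
      (L.map (R.length + ·)).Pairwise fun a b => ¬(a < c ∧ c < b) := by
    refine fun c hc => pairwise_map.2 (pairwise_of_forall_mem_list fun a _ b hb => ?_)
    have := hL.mem_iff.1 hb
    rcases mem_cons.1 hc with rfl | hc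
    · lia
    · have := hR.mem_iff.1 hc
      lia
  simp only [WordAvoids132, joinAtMax, triplewise_append, triplewise_cons, triplewise_map,
    after_max, true_and, Nat.add_lt_add_iff_left]
  exact ⟨fun h => ⟨h.1, h.2.1⟩, fun h => ⟨h.1, h.2, across_max, before_max⟩⟩

theorem perm_range_of_append_perm_range {R L : List ℕ}
    (hle : ∀ x ∈ R, ∀ y ∈ L, x ≤ y) (h : R ++ L ~ range (R.length + L.length)) :
    R ~ range R.length ∧ L ~ (range L.length).map (R.length + ·) := by
  have hR := mergeSort_perm R (· ≤ ·)
  have hL := mergeSort_perm L (· ≤ ·)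
  have hsorted : (R.mergeSort (· ≤ ·) ++ L.mergeSort (· ≤ ·)).SortedLE := by
    exact (pairwise_append.2 ⟨sortedLE_mergeSort.pairwise, sortedLE_mergeSort.pairwise,
      fun x hx y hy => hle x (hR.mem_iff.1 hx) y (hL.mem_iff.1 hy)⟩).sortedLE
  have heq := ((hR.append hL).trans h).eq_of_sortedLE hsorted (sortedLT_range _).sortedLE
  rw [range_add] at heq
  obtain ⟨hR', hL'⟩ := append_inj heq (by simp)
  exact ⟨hR' ▸ hR.symm, hL' ▸ hL.symm⟩

theorem exists_joinAtMax_eq {w : List ℕ} (hw : IsPermWord w) (ha : WordAvoids132 w)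
    (hne : w ≠ []) : ∃ L R, IsPermWord L ∧ IsPermWord R ∧ joinAtMax L R = w := by
  obtain ⟨n, hn⟩ : ∃ n, w.length = n + 1 := ⟨w.length - 1, by have := length_pos_iff.2 hne; lia⟩
  obtain ⟨L, R, rfl⟩ := append_of_mem (show n ∈ w from hw.mem_iff.2 (by lia))
  obtain rfl : n = R.length + L.length := by
    simp only [length_append, length_cons] at hn
    lia
  have hRL : R ++ L ~ range (R.length + L.length) := by
    rw [IsPermWord, hn, range_succ] at hw
    have := perm_middle.symm.trans (hw.trans (perm_append_singleton _ _))
    exact perm_append_comm.trans this.cons_inv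
  have R_le_L : ∀ c ∈ R, ∀ a ∈ L, c ≤ a := by
    intro c hc a ha'
    have h := rel_of_pairwise_cons ((triplewise_append.1 ha).2.2.1 a ha') hc
    have hlt := mem_range.1 (hRL.subset (mem_append_left L hc))
    lia
  obtain ⟨hR, hL⟩ := perm_range_of_append_perm_range R_le_L hRL
  have map_sub_add : (L.map (· - R.length)).map (R.length + ·) = L := by
    rw [map_map]
    refine (map_congr_left fun x hx => ?_).trans (map_id L)
    obtain ⟨y, -, rfl⟩ := mem_map.1 (hL.subset hx)
    simp
  refine ⟨L.map (· - R.length), R, ?_, hR, ?_⟩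
  · have := hL.map (· - R.length)
    rw [map_map] at this
    simpa [IsPermWord, Function.comp_def] using this
  · rw [joinAtMax, map_sub_add, length_map]

theorem firstGap_joinAtMax {L : List ℕ} (hL : IsPermWord L) (R : List ℕ) :
    firstGap (joinAtMax L R) = firstGap L + 1 := by
  rcases L with _ | ⟨a, L⟩
  · simp [firstGap, joinAtMax]
  · have := hL.mem_iff.1 mem_cons_self
    simp only [firstGap, length_joinAtMax]
    simp only [joinAtMax, map_cons, cons_append, headD_cons, length_cons] at this ⊢
    lia

theorem lastGap_joinAtMax_nil (L : List ℕ) : lastGap (joinAtMax L []) = 1 := by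
  simp [lastGap, joinAtMax]

theorem lastGap_joinAtMax (L : List ℕ) {R : List ℕ} (hR : IsPermWord R) (hne : R ≠ []) :
    lastGap (joinAtMax L R) = L.length + 1 + lastGap R := by
  have hlast := hR.mem_iff.1 (getLast_mem hne)
  have hjoin : (joinAtMax L R).getLastD 0 = R.getLast hne := by
    simp [joinAtMax, getLastD_eq_getLast?, getLast?_cons, getLast?_eq_getLast_of_ne_nil hne]
  have hlastR : R.getLastD 0 = R.getLast hne := by
    simp [getLastD_eq_getLast?, getLast?_eq_getLast_of_ne_nil hne]
  rw [lastGap, lastGap, length_joinAtMax, hjoin, hlastR]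
  lia

theorem lastGap_eq_zero_iff {w : List ℕ} (hw : IsPermWord w) : lastGap w = 0 ↔ w = [] := by
  rcases eq_nil_or_concat' w with rfl | ⟨w, a, rfl⟩
  · simp [lastGap]
  · have := hw.mem_iff.1 mem_concat_self
    simp only [lastGap, getLastD_concat, append_ne_nil_of_right_ne_nil w (cons_ne_nil a []),
      iff_false]
    lia

theorem wordMBounded_joinAtMax_iff (m : ℕ) {L R : List ℕ} (hL : IsPermWord L)
    (hR : IsPermWord R) :
    WordMBounded m (joinAtMax L R) ↔ WordMBounded m L ∧ WordMBounded m R ∧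
      lastGap L ≤ m ∧ (R ≠ [] → L.length + firstGap R ≤ m) := by
  have hlast : (∀ x ∈ (L.map (R.length + ·)).getLast?,
      |((R.length + L.length : ℕ) : ℤ) - x| ≤ m) ↔ lastGap L ≤ m := by
    rcases eq_nil_or_concat' L with rfl | ⟨L, a, rfl⟩
    · simp [lastGap]
    · have := hL.mem_iff.1 mem_concat_self
      simp only [lastGap, getLastD_concat, map_append, map_cons, map_nil, getLast?_concat,
        Option.mem_some_iff, forall_eq', abs_le]
      lia
  have hfirst : (∀ y ∈ R.head?, |(y : ℤ) - (R.length + L.length : ℕ)| ≤ m) ↔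
      (R ≠ [] → L.length + firstGap R ≤ m) := by
    rcases R with _ | ⟨b, R⟩
    · simp
    · have := hR.mem_iff.1 mem_cons_self
      simp only [firstGap, headD_cons, head?_cons, Option.mem_some_iff, forall_eq', abs_le,
        ne_eq, reduceCtorEq, not_false_eq_true, true_imp_iff]
      lia
  have hmap : (L.map (R.length + ·)).IsChain (fun a b : ℕ => |(b : ℤ) - a| ≤ m) ↔
      WordMBounded m L := by
    simp only [WordMBounded, isChain_map, Nat.cast_add, add_sub_add_left_eq_sub]
  rw [WordMBounded, joinAtMax, isChain_append, hmap, isChain_cons, hfirst]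
  simp only [head?_cons, Option.mem_some_iff, forall_eq', hlast]
  rw [← WordMBounded]
  tauto

/-- One-line notations of the elements of `𝒜_n^{(m)}`, for all `n` together. -/
structure IsBoundedWord (m : ℕ) (w : List ℕ) : Prop where
  isPermWord : IsPermWord w
  avoids132 : WordAvoids132 w
  mBounded : WordMBounded m w

theorem isBoundedWord_nil (m : ℕ) : IsBoundedWord m [] :=
  ⟨IsPermWord.nil, .nil, .nil⟩

theorem isBoundedWord_joinAtMax_iff {m : ℕ} {L R : List ℕ} (hL : IsPermWord L)
    (hR : IsPermWord R) :
    IsBoundedWord m (joinAtMax L R) ↔ IsBoundedWord m L ∧ IsBoundedWord m R ∧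
      lastGap L ≤ m ∧ (R ≠ [] → L.length + firstGap R ≤ m) := by
  constructor
  · rintro ⟨-, ha, hb⟩
    obtain ⟨haL, haR⟩ := (wordAvoids132_joinAtMax_iff hL hR).1 ha
    obtain ⟨hbL, hbR, hgaps⟩ := (wordMBounded_joinAtMax_iff m hL hR).1 hb
    exact ⟨⟨hL, haL, hbL⟩, ⟨hR, haR, hbR⟩, hgaps⟩
  · rintro ⟨⟨-, haL, hbL⟩, ⟨-, haR, hbR⟩, hgaps⟩
    exact ⟨isPermWord_joinAtMax hL hR, (wordAvoids132_joinAtMax_iff hL hR).2 ⟨haL, haR⟩,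
      (wordMBounded_joinAtMax_iff m hL hR).2 ⟨hbL, hbR, hgaps⟩⟩

theorem isBoundedWord_iff_exists_joinAtMax {m : ℕ} {w : List ℕ} :
    IsBoundedWord m w ↔ w = [] ∨ ∃ L R, (IsBoundedWord m L ∧ IsBoundedWord m R ∧
      lastGap L ≤ m ∧ (R ≠ [] → L.length + firstGap R ≤ m)) ∧ joinAtMax L R = w := by
  constructor
  · refine fun hw => or_iff_not_imp_left.2 fun hne => ?_
    obtain ⟨L, R, hL, hR, rfl⟩ := exists_joinAtMax_eq hw.isPermWord hw.avoids132 hne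
    exact ⟨L, R, (isBoundedWord_joinAtMax_iff hL hR).1 hw, rfl⟩
  · rintro (rfl | ⟨L, R, h, rfl⟩)
    · exact isBoundedWord_nil m
    · exact (isBoundedWord_joinAtMax_iff h.1.isPermWord h.2.1.isPermWord).2 h

/-- The one-line notation of a permutation. -/
def permWord {n : ℕ} (π : Equiv.Perm (Fin n)) : List ℕ := ofFn fun i => (π i : ℕ)

section PermWord

variable {n : ℕ} (π : Equiv.Perm (Fin n))

theorem length_permWord : (permWord π).length = n := length_ofFn

theorem isPermWord_permWord : IsPermWord (permWord π) := by
  rw [IsPermWord, length_permWord, ← map_coe_finRange_eq_range, ← ofFn_eq_map]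
  exact π.ofFn_comp_perm fun i => (i : ℕ)

theorem permWord_injective : Function.Injective (permWord (n := n)) := fun _ _ h =>
  Equiv.ext fun i => Fin.ext (congrFun (ofFn_injective h) i)

theorem exists_permWord_eq {w : List ℕ} (hw : IsPermWord w) :
    ∃ π : Equiv.Perm (Fin w.length), permWord π = w := by
  let f (i : Fin w.length) : Fin w.length := ⟨w[i], hw.mem_iff.1 (getElem_mem i.isLt)⟩
  have hnodup : w.Nodup := (Perm.nodup_iff hw).2 nodup_range
  have hf : Function.Injective f := fun i j h =>
    Fin.ext (hnodup.getElem_inj_iff.1 (congrArg Fin.val h))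
  exact ⟨Equiv.ofBijective f (Finite.injective_iff_bijective.1 hf), ofFn_getElem⟩

theorem wordAvoids132_permWord_iff : WordAvoids132 (permWord π) ↔ Avoids132 π := by
  simp only [WordAvoids132, triplewise_iff_getElem, permWord, List.getElem_ofFn, length_ofFn,
    Avoids132, not_exists, Fin.forall_iff, Fin.lt_def]
  exact ⟨fun h i _ j _ k hk ⟨hij, hjk, hpat⟩ => h i j k hij hjk hk hpat,
    fun h i j k hij hjk hk hpat => h i (by lia) j (by lia) k hk ⟨hij, hjk, hpat⟩⟩

theorem wordMBounded_permWord_iff (m : ℕ) : WordMBounded m (permWord π) ↔ MBounded m π := by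
  simp only [WordMBounded, isChain_iff_getElem, permWord, List.getElem_ofFn, length_ofFn, MBounded]

theorem isBoundedWord_permWord_iff (m : ℕ) :
    IsBoundedWord m (permWord π) ↔ Avoids132 π ∧ MBounded m π := by
  rw [← wordAvoids132_permWord_iff, ← wordMBounded_permWord_iff]
  exact ⟨fun h => ⟨h.avoids132, h.mBounded⟩, fun h => ⟨isPermWord_permWord π, h.1, h.2⟩⟩

end PermWord

theorem aCount_eq_ncard (m n : ℕ) :
    aCount m n = {w | IsBoundedWord m w ∧ w.length = n}.ncard := by
  have himage : {w | IsBoundedWord m w ∧ w.length = n} =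
      permWord '' {π : Equiv.Perm (Fin n) | Avoids132 π ∧ MBounded m π} := by
    ext w
    constructor
    · rintro ⟨hw, rfl⟩
      obtain ⟨π, hπ⟩ := exists_permWord_eq hw.isPermWord
      exact ⟨π, (isBoundedWord_permWord_iff π m).1 (hπ.symm ▸ hw), hπ⟩
    · rintro ⟨π, hπ, rfl⟩
      exact ⟨(isBoundedWord_permWord_iff π m).2 hπ, length_permWord π⟩
  rw [himage, Set.ncard_image_of_injective _ permWord_injective]
  rfl

/-- The bounded words that can stand to the left of a maximum which is not the last entry. -/
abbrev ShortBoundedWord (m : ℕ) : Type := {w : List ℕ // IsBoundedWord m w ∧ w.length ≤ m}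

theorem finite_setOf_isPermWord_length_le (m : ℕ) :
    {w : List ℕ | IsPermWord w ∧ w.length ≤ m}.Finite := by
  refine ((Set.finite_Iic m).biUnion fun n _ =>
    (range n).permutations.finite_toSet).subset fun w ⟨hw, hle⟩ => ?_
  exact Set.mem_biUnion hle (mem_permutations.2 hw)

instance (m : ℕ) : Finite (ShortBoundedWord m) :=
  ((finite_setOf_isPermWord_length_le m).subset fun _ h => ⟨h.1.isPermWord, h.2⟩).to_subtype

/-- The state of a bounded word in the transfer system: its two gaps, truncated at `m + 1`, which
preserves all comparisons with `m` and leaves finitely many states. -/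
def clampedGaps (m : ℕ) (w : List ℕ) : Fin (m + 2) × Fin (m + 2) :=
  (Fin.clamp (firstGap w) (m + 1), Fin.clamp (lastGap w) (m + 1))

/-- The letters of the transfer system: `none` appends a new maximum to a word, and `some l` puts
the short word `l`, shifted upwards, and a new maximum in front of a nonempty word. -/
abbrev Letter (m : ℕ) : Type := Option (ShortBoundedWord m)

namespace Letter

variable {m : ℕ}

/-- The action of a letter on words. -/
def attach : Letter m → List ℕ → List ℕ
  | none, w => joinAtMax w []
  | some l, w => joinAtMax l w

/-- The number of entries that a letter adds to a word. -/
def cost : Letter m → ℕ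
  | none => 1
  | some l => l.1.length + 1

/-- Whether a letter keeps a word in state `s` bounded; `s.2 ≠ 0` says that the word is nonempty. -/
def Allowed : Letter m → Fin (m + 2) × Fin (m + 2) → Prop
  | none, s => (s.2 : ℕ) ≤ m
  | some l, s => s.2 ≠ 0 ∧ l.1.length + s.1 ≤ m

/-- The action of an allowed letter on states. -/
def next : Letter m → Fin (m + 2) × Fin (m + 2) → Fin (m + 2) × Fin (m + 2)
  | none, s => (Fin.clamp (s.1 + 1) (m + 1), Fin.clamp 1 (m + 1))
  | some l, s =>
    (Fin.clamp (firstGap l.1 + 1) (m + 1), Fin.clamp (l.1.length + 1 + s.2) (m + 1))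

theorem cost_pos (a : Letter m) : 0 < a.cost := by
  cases a <;> exact Nat.succ_pos _

theorem length_attach (a : Letter m) (w : List ℕ) : (a.attach w).length = w.length + a.cost := by
  cases a <;> simp [attach, cost, length_joinAtMax]

theorem allowed_none_iff {w : List ℕ} :
    Allowed (none : Letter m) (clampedGaps m w) ↔ lastGap w ≤ m := by
  simp only [Allowed, clampedGaps, Fin.coe_clamp]
  lia

theorem allowed_some_iff {l : ShortBoundedWord m} {w : List ℕ} (hw : IsPermWord w) :
    Allowed (some l) (clampedGaps m w) ↔ w ≠ [] ∧ l.1.length + firstGap w ≤ m := by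
  rw [ne_eq, ← lastGap_eq_zero_iff hw]
  simp only [Allowed, clampedGaps, ne_eq, Fin.ext_iff, Fin.coe_clamp, Fin.val_zero]
  lia

theorem clampedGaps_attach {a : Letter m} {w : List ℕ} (hw : IsPermWord w)
    (ha : a.Allowed (clampedGaps m w)) :
    clampedGaps m (a.attach w) = a.next (clampedGaps m w) := by
  rcases a with _ | l
  · simp only [attach, next, clampedGaps, firstGap_joinAtMax hw, lastGap_joinAtMax_nil,
      Prod.mk.injEq, Fin.ext_iff, Fin.coe_clamp]
    lia
  · have hne := ((allowed_some_iff hw).1 ha).1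
    simp only [attach, next, clampedGaps, firstGap_joinAtMax l.2.1.isPermWord,
      lastGap_joinAtMax _ hw hne, Prod.mk.injEq, Fin.ext_iff, Fin.coe_clamp]
    lia

theorem attach_inj {a b : Letter m} {u v : List ℕ} (hu : IsPermWord u) (hv : IsPermWord v)
    (ha : a.Allowed (clampedGaps m u)) (hb : b.Allowed (clampedGaps m v))
    (h : a.attach u = b.attach v) : a = b ∧ u = v := by
  rcases a with _ | l <;> rcases b with _ | l'
  · exact ⟨rfl, (joinAtMax_inj hu .nil h).1⟩
  · exact absurd (joinAtMax_inj hu .nil h).2.symm ((allowed_some_iff hv).1 hb).1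
  · exact absurd (joinAtMax_inj l.2.1.isPermWord hu h).2 ((allowed_some_iff hu).1 ha).1
  · obtain ⟨hl, huv⟩ := joinAtMax_inj l.2.1.isPermWord hu h
    exact ⟨congrArg some (Subtype.ext hl), huv⟩

theorem isBoundedWord_iff_exists_attach {w : List ℕ} :
    IsBoundedWord m w ↔ w = [] ∨ ∃ a : Letter m, ∃ u, IsBoundedWord m u ∧
      a.Allowed (clampedGaps m u) ∧ a.attach u = w := by
  rw [isBoundedWord_iff_exists_joinAtMax]
  refine or_congr_right ⟨?_, ?_⟩
  · rintro ⟨L, R, ⟨hL, hR, hlast, hfirst⟩, rfl⟩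
    by_cases hne : R = []
    · subst hne
      exact ⟨none, L, hL, allowed_none_iff.2 hlast, rfl⟩
    · have hgap := hfirst hne
      exact ⟨some ⟨L, hL, by lia⟩, R, hR, (allowed_some_iff hR.isPermWord).2 ⟨hne, hgap⟩, rfl⟩
  · rintro ⟨_ | l, u, hu, ha, rfl⟩
    · exact ⟨u, [], ⟨hu, isBoundedWord_nil m, allowed_none_iff.1 ha, absurd rfl⟩, rfl⟩
    · have hlast : lastGap l.1 ≤ m := (Nat.sub_le _ _).trans l.2.2
      exact ⟨l, u, ⟨l.2.1, hu, hlast, fun _ => ((allowed_some_iff hu.isPermWord).1 ha).2⟩, rfl⟩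

end Letter

/-- The transfer system generating the bounded words from the empty word. -/
def boundedWordTransfer (m : ℕ) :
    TransferSystem (List ℕ) (Letter m) (Fin (m + 2) × Fin (m + 2)) where
  carrier := {w | IsBoundedWord m w}
  root := []
  size := length
  state := clampedGaps m
  step := Letter.attach
  cost := Letter.cost
  allowed := Letter.Allowed
  next := Letter.next
  mem_carrier_iff _ := Letter.isBoundedWord_iff_exists_attach
  step_inj hu hv := Letter.attach_inj hu.isPermWord hv.isPermWord
  state_step hu := Letter.clampedGaps_attach hu.isPermWord
  size_root := rfl
  size_step := Letter.length_attach
  cost_pos := Letter.cost_pos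

end Words

theorem aps_eq_genFun (m : ℕ) : Aps m = (boundedWordTransfer m).genFun ℚ :=
  PowerSeries.ext fun n => by
    rw [Aps, TransferSystem.genFun, PowerSeries.coeff_mk, PowerSeries.coeff_mk, aCount_eq_ncard]
    rfl

theorem generating_function_rational (m : ℕ) (hm : 1 ≤ m) :
    ∃ P Q : Polynomial ℚ, Q.coeff 0 ≠ 0 ∧
      (Q : PowerSeries ℚ) * Aps m = (P : PowerSeries ℚ) := by
  obtain ⟨P, Q, hQ, hPQ⟩ := (boundedWordTransfer m).exists_polynomial_mul_genFun_eq ℚ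
  exact ⟨P, Q, hQ ▸ one_ne_zero, aps_eq_genFun m ▸ hPQ⟩
end

section
/- Fix m ≥ 2. In the dependency graph Γ_m, the cyclic strongly connected components are exactly U_m, V_m, and I_m = {(∞, m−1)}. The sets U_m and V_m are strongly connected components with more than one vertex; I_m is a strongly connected component consisting of a single vertex with a self-loop; and every vertex of B_m² outside U_m ∪ V_m ∪ I_m forms a singleton strongly connected component without a self-loop. -/
/-- The state space `B_m²`, with `none` playing the role of `∞`. -/
abbrev StM (m : ℕ) := Option (Fin m) × Option (Fin m)

/-- Interpretation of a state coordinate as a threshold in `WithTop ℤ`. -/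
def thr {m : ℕ} (o : Option (Fin m)) : WithTop ℤ :=
  Option.elim o ⊤ (fun j => (((j : ℕ) : ℤ) : WithTop ℤ))

/-- The entry of the matrix `W_m(x)` in row `pq`, column `rs`:
`Σ_{k=1}^m c_{k,p} x^k [(r,s) = (m-k, q-k)] + x [(r,s) = (p-1, m-1)]`. -/
noncomputable def Went (m : ℕ) (pq rs : StM m) : Polynomial ℤ :=
  (∑ k ∈ Finset.Icc 1 m,
    if thr rs.1 = ((((m : ℤ) - (k : ℤ)) : ℤ) : WithTop ℤ) ∧ thr rs.2 = wsub (thr pq.2) k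
    then Polynomial.C ((ckp k (thr pq.1) : ℤ)) * Polynomial.X ^ k else 0)
  + (if thr rs.1 = wsub (thr pq.1) 1 ∧ thr rs.2 = ((((m : ℤ) - 1) : ℤ) : WithTop ℤ)
     then Polynomial.X else 0)

/-- The dependency graph `Γ_m`: edge from `src` to `tgt` iff the `(tgt, src)` entry of
`W_m(x)` is a nonzero polynomial. -/
def EdgeG (m : ℕ) (src tgt : StM m) : Prop := Went m tgt src ≠ 0

/-- Reachability in `Γ_m`. -/
def ReachG (m : ℕ) : StM m → StM m → Prop := Relation.ReflTransGen (EdgeG m)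

/-- The strongly connected component of a vertex: all mutually reachable vertices. -/
def SCCof (m : ℕ) (a : StM m) : Set (StM m) := {b | ReachG m a b ∧ ReachG m b a}

/-- A set is a strongly connected component iff it is the component of some vertex. -/
def IsSCC (m : ℕ) (C : Set (StM m)) : Prop := ∃ a, C = SCCof m a

/-- A strongly connected component is cyclic iff it contains a directed cycle. -/
def CyclicSCC (m : ℕ) (C : Set (StM m)) : Prop :=
  IsSCC m C ∧ ∃ a ∈ C, ∃ b, EdgeG m a b ∧ ReachG m b a

/-- `U_m = {(p, ∞) : 0 ≤ p ≤ m-1}`. -/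
def Uset (m : ℕ) : Set (StM m) := {x | ∃ p : Fin m, x = (some p, none)}

/-- `V_m = {(p,q) : 0 ≤ q < p ≤ m-1} ∪ {(p, m-1) : 0 ≤ p ≤ m-2}`. -/
def Vset (m : ℕ) : Set (StM m) :=
  {x | ∃ p q : Fin m, x = (some p, some q) ∧
    ((q : ℕ) < (p : ℕ) ∨ ((p : ℕ) + 2 ≤ m ∧ (q : ℕ) = m - 1))}

/-- The state `(∞, m-1)` of the singleton component `I_m`. -/
def iSt (m : ℕ) : StM m := (none, if h : 0 < m then some ⟨m - 1, by omega⟩ else none)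

/-!
The coefficients of `W_m` are natural numbers, so no cancellation occurs and `Γ_m` can be read off
from the entries: `(∞, y)` has outgoing edges only if `y = m - 1`, and they lead to states `(∞, ·)`;
those of `(r, ∞)` lead to states `(·, ∞)`; and `(r, s)` has outgoing edges only if `s < r`, or
`s = m - 1` and `r ≤ m - 2`. Hence every edge starts in `U_m ∪ V_m ∪ I_m`. Moreover, ordering the
states as `(r, s)`, `(r, ∞)`, `(∞, y)`, no edge leads back to an earlier kind, so a strongly
connected component meeting one of `V_m`, `U_m`, `I_m` is contained in it. Within `U_m` all states
communicate through `(m - 1, ∞)`. Within `V_m` every state off the subdiagonal `(t + 1, t)` has an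
edge into it, and the subdiagonal leads to the hub `(m - 1, m - 2)`, from which all of `V_m` is
reached.
-/

open Polynomial in
theorem sum_ite_C_mul_X_pow_add_ite_X_ne_zero_iff {R : Type*} [Semiring R] [CharZero R]
    {s : Finset ℕ} {c : ℕ → ℕ} {P : ℕ → Prop} [DecidablePred P] {Q : Prop} [Decidable Q] :
    (∑ k ∈ s, if P k then C (c k : R) * X ^ k else 0) + (if Q then X else 0) ≠ 0 ↔
      (∃ k ∈ s, P k ∧ 0 < c k) ∨ Q := by
  have coeff_eq (n : ℕ) :
      ((∑ k ∈ s, if P k then C (c k : R) * X ^ k else 0) + (if Q then X else 0)).coeff n =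
        (((if n ∈ s then if P n then c n else 0 else 0) +
          (if Q then if 1 = n then 1 else 0 else 0) : ℕ) : R) := by
    simp only [coeff_add, finsetSum_coeff, apply_ite (coeff · n), coeff_C_mul_X_pow, coeff_zero,
      coeff_X]
    push_cast
    congr 1
    rw [← Finset.sum_ite_eq s n (fun k => if P k then (c k : R) else 0)]
    exact Finset.sum_congr rfl fun k _ => by split_ifs <;> rfl
  rw [Ne, Polynomial.ext_iff, not_forall]
  simp only [coeff_eq, coeff_zero, Nat.cast_eq_zero]
  constructor
  · grind
  · rintro (⟨k, hk, hP, hc⟩ | hQ)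
    · exact ⟨k, by rw [if_pos hk, if_pos hP]; omega⟩
    · exact ⟨1, by rw [if_pos hQ, if_pos rfl]; omega⟩

variable {m k : ℕ}

theorem ckp_pos_iff {u : WithTop ℤ} : 0 < ckp k u ↔ k ≤ 1 ∨ 1 ≤ u := by
  unfold ckp
  split_ifs with hk
  · simp [hk]
  rw [Nat.card_pos_iff, and_iff_left (by exact inferInstance), nonempty_subtype, or_iff_right hk]
  constructor
  · rintro ⟨σ, -, hσ⟩
    refine le_trans (WithTop.coe_le_coe.mpr ?_) hσ
    omega
  · -- The decreasing permutation attains the least possible deficiency, `1`.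
    intro hu
    refine ⟨Fin.revPerm, ?_, le_trans (WithTop.coe_le_coe.mpr ?_) hu⟩
    · rintro ⟨i, j, l, hij, hjl, hil, -⟩
      exact (Fin.rev_lt_rev.mp hil).not_gt (hij.trans hjl)
    · simp only [Fin.revPerm_apply, Fin.val_rev]
      omega

theorem thr_none : thr (none : Option (Fin m)) = ⊤ := rfl

theorem thr_some (p : Fin m) : thr (some p) = ((p : ℤ) : WithTop ℤ) := rfl

theorem one_le_thr_some {p : Fin m} : 1 ≤ thr (some p) ↔ 1 ≤ (p : ℕ) := by
  rw [thr_some, ← WithTop.coe_one, WithTop.coe_le_coe]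
  omega

theorem thr_eq_sub_one_iff {o : Option (Fin m)} :
    thr o = ((m - 1 : ℤ) : WithTop ℤ) ↔ ∃ p : Fin m, o = some p ∧ (p : ℕ) + 1 = m := by
  cases o with
  | none => simp only [thr_none, WithTop.top_ne_coe, reduceCtorEq, false_and, exists_false]
  | some p =>
    simp only [thr_some, WithTop.coe_inj, Option.some.injEq, exists_eq_left']
    omega

theorem top_eq_wsub_thr_iff {o : Option (Fin m)} : ⊤ = wsub (thr o) k ↔ o = none := by
  cases o <;> simp only [thr_none, thr_some, wsub, WithTop.map_top, WithTop.map_coe,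
    WithTop.top_ne_coe, reduceCtorEq]

theorem thr_some_eq_wsub_thr_iff {p : Fin m} {o : Option (Fin m)} :
    thr (some p) = wsub (thr o) k ↔ ∃ q : Fin m, o = some q ∧ (p : ℕ) + k = q := by
  cases o with
  | none => simp [thr_some, thr_none, wsub]
  | some q =>
    simp only [thr_some, wsub, WithTop.map_coe, WithTop.coe_inj, Option.some.injEq, exists_eq_left']
    omega

variable {a b : StM m}

theorem sccOf_eq_of_mem (hab : b ∈ SCCof m a) : SCCof m b = SCCof m a :=
  Set.ext fun _ => ⟨fun hc => ⟨hab.1.trans hc.1, hc.2.trans hab.2⟩,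
    fun hc => ⟨hab.2.trans hc.1, hc.2.trans hab.1⟩⟩

theorem IsSCC.cyclicSCC_of_nontrivial {C : Set (StM m)} (hC : IsSCC m C) (hnt : C.Nontrivial) :
    CyclicSCC m C := by
  refine ⟨hC, ?_⟩
  obtain ⟨c, rfl⟩ := hC
  obtain ⟨a, ha, b, hb, hab⟩ := hnt
  obtain rfl | ⟨d, had, hdb⟩ := Relation.ReflTransGen.cases_head (ha.2.trans hb.1)
  · exact absurd rfl hab
  · exact ⟨a, ha, d, had, hdb.trans (hb.2.trans ha.1)⟩

theorem edgeG_iff : EdgeG m a b ↔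
    (∃ k ∈ Finset.Icc 1 m,
      (thr a.1 = ((m - k : ℤ) : WithTop ℤ) ∧ thr a.2 = wsub (thr b.2) k) ∧
        (k ≤ 1 ∨ 1 ≤ thr b.1)) ∨
    (thr a.1 = wsub (thr b.1) 1 ∧ thr a.2 = ((m - 1 : ℤ) : WithTop ℤ)) := by
  simp only [EdgeG, Went, ← ckp_pos_iff]
  exact sum_ite_C_mul_X_pow_add_ite_X_ne_zero_iff

theorem edgeG_none_iff {y : Option (Fin m)} :
    EdgeG m (none, y) b ↔ b.1 = none ∧ ∃ s : Fin m, y = some s ∧ (s : ℕ) + 1 = m := by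
  simp only [edgeG_iff, thr_none, WithTop.top_ne_coe, false_and, and_false, exists_false,
    false_or, top_eq_wsub_thr_iff, thr_eq_sub_one_iff]

theorem edgeG_some_iff {r : Fin m} {y : Option (Fin m)} :
    EdgeG m (some r, y) b ↔
      (thr y = wsub (thr b.2) (m - r) ∧ ((r : ℕ) + 1 = m ∨ 1 ≤ thr b.1)) ∨
      (∃ p : Fin m, b.1 = some p ∧ (r : ℕ) + 1 = p) ∧
        ∃ s : Fin m, y = some s ∧ (s : ℕ) + 1 = m := by
  have block_length_iff (k : ℕ) :
      (k ∈ Finset.Icc 1 m ∧ thr (some r) = ((m - k : ℤ) : WithTop ℤ)) ↔ k = m - r := by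
    rw [thr_some, WithTop.coe_inj, Finset.mem_Icc]
    omega
  have length_le_one_iff : m - (r : ℕ) ≤ 1 ↔ (r : ℕ) + 1 = m := by omega
  rw [edgeG_iff]
  refine or_congr ?_ ?_
  · simp only [and_assoc]
    simp only [← and_assoc (a := _ ∈ Finset.Icc 1 m), block_length_iff, exists_eq_left,
      length_le_one_iff]
  · simp only [thr_some_eq_wsub_thr_iff, thr_eq_sub_one_iff]

theorem edgeG_some_none_iff {r : Fin m} :
    EdgeG m (some r, none) b ↔ b.2 = none ∧ ((r : ℕ) + 1 = m ∨ 1 ≤ thr b.1) := by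
  simp [edgeG_some_iff, thr_none, top_eq_wsub_thr_iff]

theorem edgeG_some_some_iff {r s : Fin m} :
    EdgeG m (some r, some s) b ↔
      (∃ q : Fin m, b.2 = some q ∧ (s : ℕ) + m = q + r) ∧ ((r : ℕ) + 1 = m ∨ 1 ≤ thr b.1) ∨
      (∃ p : Fin m, b.1 = some p ∧ (r : ℕ) + 1 = p) ∧ (s : ℕ) + 1 = m := by
  have shift_iff (q : Fin m) : (s : ℕ) + (m - r) = q ↔ (s : ℕ) + m = q + r := by omega
  simp only [edgeG_some_iff, thr_some_eq_wsub_thr_iff, shift_iff, Option.some.injEq,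
    exists_eq_left']

theorem edgeG_block {r s p q : Fin m} (hq : (s : ℕ) + m = q + r)
    (hp : (r : ℕ) + 1 = m ∨ 1 ≤ (p : ℕ)) : EdgeG m (some r, some s) (some p, some q) :=
  edgeG_some_some_iff.mpr (.inl ⟨⟨q, rfl, hq⟩, hp.imp_right one_le_thr_some.mpr⟩)

theorem edgeG_shift {r s p : Fin m} {y : Option (Fin m)} (hp : (r : ℕ) + 1 = p)
    (hs : (s : ℕ) + 1 = m) : EdgeG m (some r, some s) (some p, y) :=
  edgeG_some_some_iff.mpr (.inr ⟨⟨p, rfl, hp⟩, hs⟩)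

theorem edgeG_iSt (hm : 0 < m) : EdgeG m (iSt m) (iSt m) :=
  edgeG_none_iff.mpr ⟨rfl, ⟨m - 1, by omega⟩, dif_pos hm, Nat.sub_add_cancel hm⟩

theorem EdgeG.source_mem (h : EdgeG m a b) : a ∈ Uset m ∪ Vset m ∪ {iSt m} := by
  obtain ⟨_ | r, _ | s⟩ := a
  · simp [edgeG_none_iff] at h
  · obtain ⟨-, _, ⟨⟩, hs⟩ := edgeG_none_iff.mp h
    have eq_last : s = ⟨m - 1, by omega⟩ := Fin.ext (Nat.eq_sub_of_add_eq hs)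
    have eq_iSt : some s = (iSt m).2 := by
      simp only [iSt, Fin.pos s, dif_pos, eq_last]
    exact .inr (Prod.ext rfl eq_iSt)
  · exact .inl (.inl ⟨r, rfl⟩)
  · refine .inl (.inr ⟨r, s, rfl, ?_⟩)
    obtain ⟨⟨q, -, hq⟩, -⟩ | ⟨⟨p, -, hp⟩, hs⟩ := edgeG_some_some_iff.mp h <;> omega

/-- The level of a state: `0` if both coordinates are finite, `1` if only the first one is, and `2`
if the first one is `∞`. The level never decreases along an edge and separates `V_m`, `U_m` and
`I_m`, which lie on the levels `0`, `1` and `2`. -/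
def level : StM m → ℕ
  | (some _, some _) => 0
  | (some _, none) => 1
  | (none, _) => 2

theorem EdgeG.level_le (h : EdgeG m a b) : level a ≤ level b := by
  obtain ⟨_ | r, _ | s⟩ := a <;> obtain ⟨_ | p, _ | q⟩ := b <;>
    simp_all [level, edgeG_none_iff, edgeG_some_none_iff]

theorem ReachG.level_le (h : ReachG m a b) : level a ≤ level b := by
  induction h with
  | refl => rfl
  | tail _ hbc ih => exact ih.trans hbc.level_le

theorem ReachG.eq_or_source_mem (h : ReachG m a b) : a = b ∨ a ∈ Uset m ∪ Vset m ∪ {iSt m} :=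
  (Relation.ReflTransGen.cases_head h).imp_right fun ⟨_, hac, _⟩ => hac.source_mem

theorem reachG_of_mem_Uset (hm : 2 ≤ m) (ha : a ∈ Uset m) (hb : b ∈ Uset m) : ReachG m a b := by
  obtain ⟨p, rfl⟩ := ha
  obtain ⟨q, rfl⟩ := hb
  let last : Fin m := ⟨m - 1, by omega⟩
  have to_last : EdgeG m (some p, none) (some last, none) :=
    edgeG_some_none_iff.mpr ⟨rfl, .inr (one_le_thr_some.mpr (Nat.le_sub_one_of_lt hm))⟩
  have from_last : EdgeG m (some last, none) (some q, none) :=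
    edgeG_some_none_iff.mpr ⟨rfl, .inl (Nat.sub_add_cancel (by omega))⟩
  exact .tail (.single to_last) from_last

/-- The hub `(m - 1, m - 2)` of `V_m`, through which any two states of `V_m` are connected. -/
def hub (hm : 2 ≤ m) : StM m := (some ⟨m - 1, by omega⟩, some ⟨m - 2, by omega⟩)

theorem hub_edgeG (hm : 2 ≤ m) {p s : Fin m} (hs : (s : ℕ) + 1 = m) :
    EdgeG m (hub hm) (some p, some s) :=
  edgeG_block (by grind) (.inl (by grind))

theorem hub_reachG_of_mem_Vset (hm : 2 ≤ m) (hb : b ∈ Vset m) : ReachG m (hub hm) b := by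
  obtain ⟨p, q, rfl, hpq⟩ := hb
  by_cases hp : (p : ℕ) = 0
  · exact .single (hub_edgeG hm (by omega))
  · let pred : Fin m := ⟨p - 1, by omega⟩
    let last : Fin m := ⟨m - 1, by omega⟩
    have to_pred : EdgeG m (hub hm) (some pred, some last) := hub_edgeG hm (by grind)
    exact .tail (.single to_pred) (edgeG_shift (by grind) (by grind))

theorem reachG_hub_of_subdiagonal (hm : 2 ≤ m) {r s : Fin m} (hrs : (s : ℕ) + 1 = r) :
    ReachG m (some r, some s) (hub hm) := by
  let last : Fin m := ⟨m - 1, by omega⟩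
  let penult : Fin m := ⟨m - 2, by omega⟩
  by_cases hr : (r : ℕ) + 1 = m
  · have eq_hub : (some r, some s) = hub hm := by
      rw [show r = last from Fin.ext (by grind), show s = penult from Fin.ext (by grind)]
      rfl
    exact eq_hub ▸ .refl
  · have to_penult : EdgeG m (some r, some s) (some penult, some last) :=
      edgeG_block (by grind) (.inr (by grind))
    exact .tail (.single to_penult) (edgeG_shift (by grind) (by grind))

theorem reachG_hub_of_mem_Vset (hm : 2 ≤ m) (ha : a ∈ Vset m) : ReachG m a (hub hm) := by
  obtain ⟨r, s, rfl, hsr | ⟨hr, hs⟩⟩ := ha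
  · by_cases hrs : (s : ℕ) + 1 = r
    · exact reachG_hub_of_subdiagonal hm hrs
    · let p : Fin m := ⟨s + m - r + 1, by omega⟩
      let q : Fin m := ⟨s + m - r, by omega⟩
      have to_subdiagonal : EdgeG m (some r, some s) (some p, some q) :=
        edgeG_block (by grind) (.inr (by grind))
      exact .head to_subdiagonal (reachG_hub_of_subdiagonal hm rfl)
  · let p : Fin m := ⟨r + 1, by omega⟩
    have to_subdiagonal : EdgeG m (some r, some s) (some p, some r) :=
      edgeG_shift rfl (by omega)
    exact .head to_subdiagonal (reachG_hub_of_subdiagonal hm rfl)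

theorem reachG_of_mem_Vset (hm : 2 ≤ m) (ha : a ∈ Vset m) (hb : b ∈ Vset m) : ReachG m a b :=
  (reachG_hub_of_mem_Vset hm ha).trans (hub_reachG_of_mem_Vset hm hb)

theorem sccOf_eq_of_level {S : Set (StM m)}
    (hreach : ∀ b ∈ S, ∀ c ∈ S, ReachG m b c)
    (hlevel : ∀ b ∈ Uset m ∪ Vset m ∪ {iSt m}, level b = level a → b ∈ S) (ha : a ∈ S) :
    SCCof m a = S := by
  ext b
  refine ⟨fun ⟨hab, hba⟩ => ?_, fun hb => ⟨hreach a ha b hb, hreach b hb a ha⟩⟩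
  obtain rfl | hb := hba.eq_or_source_mem
  · exact ha
  · exact hlevel b hb (hba.level_le.antisymm hab.level_le)

theorem sccOf_eq_Uset_of_mem (hm : 2 ≤ m) (ha : a ∈ Uset m) : SCCof m a = Uset m := by
  refine sccOf_eq_of_level (fun _ hb _ hc => reachG_of_mem_Uset hm hb hc) ?_ ha
  obtain ⟨p, rfl⟩ := ha
  rintro _ ((hU | ⟨_, _, rfl, -⟩) | rfl) hlevel
  · exact hU
  · cases hlevel
  · cases hlevel

theorem sccOf_eq_Vset_of_mem (hm : 2 ≤ m) (ha : a ∈ Vset m) : SCCof m a = Vset m := by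
  refine sccOf_eq_of_level (fun _ hb _ hc => reachG_of_mem_Vset hm hb hc) ?_ ha
  obtain ⟨p, q, rfl, -⟩ := ha
  rintro _ ((⟨_, rfl⟩ | hV) | rfl) hlevel
  · cases hlevel
  · exact hV
  · cases hlevel

theorem sccOf_iSt : SCCof m (iSt m) = {iSt m} := by
  refine sccOf_eq_of_level ?_ ?_ rfl
  · rintro _ rfl _ rfl
    exact .refl
  · rintro _ ((⟨_, rfl⟩ | ⟨_, _, rfl, -⟩) | hI) hlevel
    · cases hlevel
    · cases hlevel
    · exact hI

theorem sccOf_eq_singleton_of_notMem (ha : a ∉ Uset m ∪ Vset m ∪ {iSt m}) : SCCof m a = {a} :=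
  Set.eq_singleton_iff_unique_mem.mpr
    ⟨⟨.refl, .refl⟩, fun _ hb => (hb.1.eq_or_source_mem.resolve_right ha).symm⟩

theorem nontrivial_Uset (hm : 2 ≤ m) : (Uset m).Nontrivial :=
  ⟨_, ⟨⟨0, by omega⟩, rfl⟩, _, ⟨⟨1, by omega⟩, rfl⟩, by simp⟩

theorem nontrivial_Vset (hm : 2 ≤ m) : (Vset m).Nontrivial :=
  ⟨_, ⟨⟨0, by omega⟩, ⟨m - 1, by omega⟩, rfl, .inr ⟨by omega, rfl⟩⟩,
    _, ⟨⟨1, by omega⟩, ⟨0, by omega⟩, rfl, .inl one_pos⟩, by simp⟩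

theorem isSCC_Uset (hm : 2 ≤ m) : IsSCC m (Uset m) :=
  (nontrivial_Uset hm).nonempty.imp fun _ ha => (sccOf_eq_Uset_of_mem hm ha).symm

theorem isSCC_Vset (hm : 2 ≤ m) : IsSCC m (Vset m) :=
  (nontrivial_Vset hm).nonempty.imp fun _ ha => (sccOf_eq_Vset_of_mem hm ha).symm

theorem isSCC_singleton_iSt : IsSCC m {iSt m} :=
  ⟨iSt m, sccOf_iSt.symm⟩

theorem cyclicSCC_iff (hm : 2 ≤ m) {C : Set (StM m)} :
    CyclicSCC m C ↔ C = Uset m ∨ C = Vset m ∨ C = {iSt m} := by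
  constructor
  · rintro ⟨⟨c, rfl⟩, a, ha, b, hab, -⟩
    rw [← sccOf_eq_of_mem ha]
    obtain (hU | hV) | rfl := hab.source_mem
    · exact .inl (sccOf_eq_Uset_of_mem hm hU)
    · exact .inr (.inl (sccOf_eq_Vset_of_mem hm hV))
    · exact .inr (.inr sccOf_iSt)
  · rintro (rfl | rfl | rfl)
    · exact (isSCC_Uset hm).cyclicSCC_of_nontrivial (nontrivial_Uset hm)
    · exact (isSCC_Vset hm).cyclicSCC_of_nontrivial (nontrivial_Vset hm)
    · exact ⟨isSCC_singleton_iSt, iSt m, rfl, iSt m, edgeG_iSt (by omega), .refl⟩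

theorem cyclic_components (m : ℕ) (hm : 2 ≤ m) :
    -- the cyclic strongly connected components are exactly U_m, V_m, I_m
    (∀ C : Set (StM m), IsSCC m C →
      (CyclicSCC m C ↔ C = Uset m ∨ C = Vset m ∨ C = {iSt m})) ∧
    -- U_m and V_m are strongly connected components with more than one vertex
    (IsSCC m (Uset m) ∧ 1 < (Uset m).ncard) ∧
    (IsSCC m (Vset m) ∧ 1 < (Vset m).ncard) ∧
    -- I_m is a strongly connected component consisting of a single vertex with a self-loop
    (IsSCC m {iSt m} ∧ EdgeG m (iSt m) (iSt m)) ∧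
    -- every other vertex is a singleton strongly connected component without a self-loop
    (∀ v : StM m, v ∉ Uset m ∪ Vset m ∪ {iSt m} →
      SCCof m v = {v} ∧ ¬ EdgeG m v v) := by
  refine ⟨fun C _ => cyclicSCC_iff hm,
    ⟨isSCC_Uset hm, Set.one_lt_ncard_iff_nontrivial.mpr (nontrivial_Uset hm)⟩,
    ⟨isSCC_Vset hm, Set.one_lt_ncard_iff_nontrivial.mpr (nontrivial_Vset hm)⟩,
    ⟨isSCC_singleton_iSt, edgeG_iSt (by omega)⟩,
    fun v hv => ⟨sccOf_eq_singleton_of_notMem hv, fun hloop => hv hloop.source_mem⟩⟩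
end

section
/- For m = 1 the sequence a_n^{(1)} satisfies an eventual homogeneous linear recurrence with constant coefficients of order at most 1 (i.e., there exist a rational constant c and an integer N such that a_n^{(1)} = c · a_{n−1}^{(1)} for all n ≥ N). For every m ≥ 2, the sequence a_n^{(m)} satisfies an eventual homogeneous linear recurrence with constant rational coefficients of order at most d_m = m² + m(m−1)(m+2)/2 + 1; that is, there exist rational numbers c_1, …, c_{d_m} and an integer N such that a_n^{(m)} = Σ_{i=1}^{d_m} c_i a_{n−i}^{(m)} for all n ≥ N. -/
/-- The recurrence-order bound `d_m = m² + m(m-1)(m+2)/2 + 1`. -/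
def dOrder (m : ℕ) : ℕ := m ^ 2 + m * (m - 1) * (m + 2) / 2 + 1

/-!
The letters to the left of the largest letter of a 132-avoider all exceed those to its right, so
132-avoiders correspond to binary trees. In terms of the tree, `m`-boundedness only involves the
ranks, counted from the top, of the first and last letters of each subtree: at a node with left
subtree `L` and nonempty right subtree `R` it requires the first rank of `R` to be at most
`m - |L|`, whence `|L| < m`. Counting avoiders with a weight that depends on their first and last
ranks therefore gives a recursion that looks back at most `m` steps and in which only finitely many
weights matter, since a subtree of size `n - l` sees ranks truncated at `m - l`. The resulting
sequences span a finite-dimensional space which is invariant under the shift and contains a shift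
of `aCount m`, and the Cayley–Hamilton theorem for the shift on this space yields the recurrence.
-/

namespace BoundedAvoider

open BinaryTree

section Words

/-- The word `l` avoids the pattern 132. -/
def AvoidsWord {α : Type*} [LT α] (l : List α) : Prop :=
  l.Triplewise fun a b c ↦ ¬ (a < c ∧ c < b)

/-- Adjacent letters of the word `l` differ by at most `m`. -/
def StepsLE (m : ℕ) (l : List ℕ) : Prop :=
  l.IsChain fun a b : ℕ ↦ |(b : ℤ) - a| ≤ m

theorem avoidsWord_map_iff {α β : Type*} [LinearOrder α] [Preorder β] {f : α → β}
    (hf : StrictMono f) {l : List α} : AvoidsWord (l.map f) ↔ AvoidsWord l := by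
  simp only [AvoidsWord, List.triplewise_map, hf.lt_iff_lt]

theorem avoidsWord_append_cons_iff {α : Type*} [LinearOrder α] {A B : List α} {x : α}
    (hA : ∀ a ∈ A, a < x) (hB : ∀ b ∈ B, b < x) :
    AvoidsWord (A ++ x :: B) ↔ AvoidsWord A ∧ AvoidsWord B ∧ ∀ a ∈ A, ∀ b ∈ B, b ≤ a := by
  simp only [AvoidsWord, List.triplewise_append, List.triplewise_cons, List.pairwise_cons,
    List.forall_mem_cons]
  constructor
  · rintro ⟨avA, ⟨-, avB⟩, h, -⟩
    exact ⟨avA, avB, fun a ha b hb ↦ not_lt.1 fun hab ↦ (h a ha).1 b hb ⟨hab, hB b hb⟩⟩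
  · rintro ⟨avA, avB, h⟩
    refine ⟨avA, ⟨?_, avB⟩, fun a ha ↦ ⟨fun b hb hab ↦ (h a ha b hb).not_gt hab.1, ?_⟩, ?_, ?_⟩
    · exact List.pairwise_of_forall_mem_list fun _ _ c hc hbc ↦ (hB c hc).not_gt hbc.1
    · exact List.pairwise_of_forall_mem_list fun b _ c hc hbc ↦ (h a ha c hc).not_gt hbc.1
    · exact List.pairwise_of_forall_mem_list fun a _ b hb hab ↦ (hA b hb).not_gt hab.2
    · exact fun b hb ↦
        List.pairwise_of_forall_mem_list fun a ha _ _ hab ↦ (h a ha b hb).not_gt hab.1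

theorem stepsLE_map_add_iff {m k : ℕ} {l : List ℕ} :
    StepsLE m (l.map (k + ·)) ↔ StepsLE m l := by
  simp [StepsLE, List.isChain_map]

theorem perm_range_of_append_perm_range {A B : List ℕ} {n : ℕ}
    (h : (B ++ A).Perm (List.range n)) (hBA : ∀ a ∈ A, ∀ b ∈ B, b ≤ a) :
    B.Perm (List.range B.length) ∧ A.Perm ((List.range A.length).map (B.length + ·)) := by
  have hn : n = B.length + A.length := by simpa using h.length_eq.symm
  have sorted_eq : B.mergeSort (· ≤ ·) ++ A.mergeSort (· ≤ ·) =
      List.range B.length ++ (List.range A.length).map (B.length + ·) := by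
    rw [← List.range_add, ← hn]
    refine List.Perm.eq_of_pairwise' (r := (· ≤ ·)) ?_ List.pairwise_le_range
      (((List.mergeSort_perm _ _).append (List.mergeSort_perm _ _)).trans h)
    refine List.pairwise_append.2
      ⟨List.pairwise_mergeSort' _ _, List.pairwise_mergeSort' _ _, fun b hb a ha ↦ ?_⟩
    exact hBA a (List.mem_mergeSort.1 ha) b (List.mem_mergeSort.1 hb)
  obtain ⟨hB, hA⟩ := List.append_inj sorted_eq (by simp)
  exact ⟨hB ▸ (List.mergeSort_perm _ _).symm, hA ▸ (List.mergeSort_perm _ _).symm⟩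

/-- The one-line word of `π`, on the letters `0, …, n - 1`. -/
def oneLine {n : ℕ} (π : Equiv.Perm (Fin n)) : List ℕ := List.ofFn fun i ↦ (π i : ℕ)

theorem oneLine_injective {n : ℕ} : Function.Injective (oneLine (n := n)) := fun _ _ h ↦
  Equiv.ext fun i ↦ Fin.ext (congrFun (List.ofFn_injective h) i)

theorem oneLine_perm_range {n : ℕ} (π : Equiv.Perm (Fin n)) :
    (oneLine π).Perm (List.range n) := by
  have h : (List.ofFn π).Perm (List.finRange n) := by
    simpa [List.ofFn_id] using π.ofFn_comp_perm id
  simpa [oneLine, List.map_ofFn, Function.comp_def] using h.map Fin.val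

theorem exists_oneLine_eq {n : ℕ} {l : List ℕ} (h : l.Perm (List.range n)) :
    ∃ π : Equiv.Perm (Fin n), oneLine π = l := by
  obtain rfl : l.length = n := by simpa using h.length_eq
  have get_lt (i : Fin l.length) : l.get i < l.length := by
    simpa using h.mem_iff.1 (List.get_mem l i)
  have get_injective : Function.Injective fun i ↦ (⟨l.get i, get_lt i⟩ : Fin l.length) :=
    fun i j hij ↦
      List.nodup_iff_injective_get.1 (h.nodup_iff.2 List.nodup_range) (Fin.mk.inj hij)
  exact ⟨.ofBijective _ (Finite.injective_iff_bijective.1 get_injective), by simp [oneLine]⟩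

theorem avoids132_iff_avoidsWord_oneLine {n : ℕ} {π : Equiv.Perm (Fin n)} :
    Avoids132 π ↔ AvoidsWord (oneLine π) := by
  simp only [AvoidsWord, List.triplewise_iff_getElem, Avoids132, oneLine, List.length_ofFn,
    List.getElem_ofFn, not_exists]
  constructor
  · exact fun h i j k hij hjk hk hπ ↦
      h ⟨i, by omega⟩ ⟨j, by omega⟩ ⟨k, hk⟩ ⟨hij, hjk, hπ.1, hπ.2⟩
  · exact fun h i j k ⟨hij, hjk, hπ⟩ ↦ h i j k hij hjk k.2 hπ

theorem mBounded_iff_stepsLE_oneLine {m n : ℕ} {π : Equiv.Perm (Fin n)} :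
    MBounded m π ↔ StepsLE m (oneLine π) := by
  simp only [StepsLE, List.isChain_iff_getElem, MBounded, oneLine, List.length_ofFn,
    List.getElem_ofFn]

theorem aCount_eq_ncard_words (m n : ℕ) :
    aCount m n = {l : List ℕ | l.Perm (List.range n) ∧ AvoidsWord l ∧ StepsLE m l}.ncard := by
  rw [aCount, ← Set.coe_ofPred, Nat.card_coe_set_eq,
    ← Set.ncard_image_of_injective _ oneLine_injective]
  congr 1
  ext l
  constructor
  · rintro ⟨π, ⟨hav, hm⟩, rfl⟩
    exact ⟨oneLine_perm_range π, avoids132_iff_avoidsWord_oneLine.1 hav,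
      mBounded_iff_stepsLE_oneLine.1 hm⟩
  · rintro ⟨hl, hav, hm⟩
    obtain ⟨π, rfl⟩ := exists_oneLine_eq hl
    exact ⟨π, ⟨avoids132_iff_avoidsWord_oneLine.2 hav, mBounded_iff_stepsLE_oneLine.2 hm⟩, rfl⟩

end Words

section Trees

/-- The 132-avoiding word on `0, …, t.numNodes - 1` encoded by the binary tree `t`: avoiding 132
forces all letters to the left of the largest one to exceed all letters to the right of it, and the
two subtrees encode the two sides. -/
def word : BinaryTree Unit → List ℕ
  | .nil => []
  | .node _ L R => (word L).map (R.numNodes + ·) ++ (L.numNodes + R.numNodes) :: word R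

theorem word_perm_range (t : BinaryTree Unit) : (word t).Perm (List.range t.numNodes) := by
  induction t with
  | nil => rfl
  | node _ L R ihL ihR =>
    rw [word, numNodes, List.range_succ, Nat.add_comm L.numNodes, List.range_add]
    exact List.perm_middle.trans <|
      ((List.perm_append_comm.trans (ihR.append (ihL.map _))).cons _).trans
        (List.perm_append_singleton _ _).symm

theorem length_word (t : BinaryTree Unit) : (word t).length = t.numNodes := by
  simpa using (word_perm_range t).length_eq

theorem mem_word_iff {t : BinaryTree Unit} {x : ℕ} : x ∈ word t ↔ x < t.numNodes := by
  rw [(word_perm_range t).mem_iff, List.mem_range]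

theorem word_eq_nil_iff {t : BinaryTree Unit} : word t = [] ↔ t = .nil := by
  cases t <;> simp [word]

theorem avoidsWord_word (t : BinaryTree Unit) : AvoidsWord (word t) := by
  induction t with
  | nil => exact .nil
  | node _ L R ihL ihR =>
    have hA : ∀ a ∈ (word L).map (R.numNodes + ·),
        R.numNodes ≤ a ∧ a < L.numNodes + R.numNodes := by
      simp only [List.forall_mem_map, mem_word_iff]
      omega
    have hB : ∀ b ∈ word R, b < R.numNodes := fun _ ↦ mem_word_iff.1
    rw [word, avoidsWord_append_cons_iff (fun a ha ↦ (hA a ha).2)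
      fun b hb ↦ (hB b hb).trans_le (Nat.le_add_left _ _)]
    exact ⟨(avoidsWord_map_iff (add_right_strictMono)).2 ihL, ihR,
      fun a ha b hb ↦ (hB b hb).le.trans (hA a ha).1⟩

theorem word_injective : Function.Injective word := by
  intro t s h
  induction t generalizing s with
  | nil => exact (word_eq_nil_iff.1 h.symm).symm
  | node _ L R ihL ihR =>
    cases s with
    | nil => simp [word] at h
    | node _ L' R' =>
      have hsize : L.numNodes + R.numNodes = L'.numNodes + R'.numNodes := by
        simpa [length_word] using congrArg List.length h
      have max_notMem_left : L'.numNodes + R'.numNodes ∉ (word L).map (R.numNodes + ·) := by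
        simp only [List.mem_map, mem_word_iff]
        omega
      have max_notMem_right : L'.numNodes + R'.numNodes ∉ word R := by
        simp only [mem_word_iff]
        omega
      rw [word, word, List.append_cons_inj_of_notMem max_notMem_left max_notMem_right] at h
      obtain ⟨hL, -, hR⟩ := h
      obtain rfl := ihR hR
      obtain rfl := ihL (List.map_injective_iff.2 (add_right_injective _) hL)
      rfl

theorem exists_word_eq {n : ℕ} {l : List ℕ} (hl : l.Perm (List.range n)) (hav : AvoidsWord l) :
    ∃ t, word t = l := by
  induction n using Nat.strong_induction_on generalizing l with
  | _ n ih =>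
  cases n with
  | zero => exact ⟨.nil, by simpa [word] using hl.symm⟩
  | succ n =>
    obtain ⟨A, B, rfl⟩ := List.append_of_mem (hl.mem_iff.2 (List.self_mem_range_succ (n := n)))
    have hAB : (A ++ B).Perm (List.range n) := List.Perm.cons_inv (a := n) <|
      (List.perm_middle.symm.trans hl).trans (by simp [List.range_succ])
    have lt_of_mem : ∀ x ∈ A ++ B, x < n := fun x hx ↦ List.mem_range.1 (hAB.mem_iff.1 hx)
    have hlen : A.length + B.length = n := by simpa using hAB.length_eq
    obtain ⟨avA, avB, hBA⟩ := (avoidsWord_append_cons_iff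
      (fun a ha ↦ lt_of_mem a (by simp [ha])) fun b hb ↦ lt_of_mem b (by simp [hb])).1 hav
    obtain ⟨hB, hA⟩ := perm_range_of_append_perm_range (List.perm_append_comm.trans hAB) hBA
    obtain ⟨A', rfl, hA'⟩ :
        ∃ A' : List ℕ, A = A'.map (B.length + ·) ∧ A'.Perm (List.range A.length) :=
      (congrFun₂ (List.eq_map_comp_perm (B.length + ·)) A (List.range A.length)).mpr hA
    obtain ⟨L, rfl⟩ := ih _ (by omega) hA' ((avoidsWord_map_iff add_right_strictMono).1 avA)
    obtain ⟨R, rfl⟩ := ih _ (by omega) hB avB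
    refine ⟨L △ R, ?_⟩
    simp_all [word, length_word]

/-- The rank, counted from the top starting at 1, of the first letter of `word t`. -/
def firstRank : BinaryTree Unit → ℕ
  | .nil => 0
  | .node _ L _ => firstRank L + 1

/-- The rank, counted from the top starting at 1, of the last letter of `word t`. -/
def lastRank : BinaryTree Unit → ℕ
  | .nil => 0
  | .node _ L R => if R = .nil then 1 else lastRank R + L.numNodes + 1

/-- Adjacent letters of `word t` differ by at most `m`, expressed on the tree: the largest letter
has to be close to the last letter of the left part and to the first letter of the right part. -/
def Bounded (m : ℕ) : BinaryTree Unit → Prop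
  | .nil => True
  | .node _ L R =>
    Bounded m L ∧ Bounded m R ∧ lastRank L ≤ m ∧ (R ≠ .nil → firstRank R + L.numNodes ≤ m)

theorem add_firstRank_of_mem_head? {t : BinaryTree Unit} {x : ℕ} (hx : x ∈ (word t).head?) :
    x + firstRank t = t.numNodes := by
  induction t generalizing x with
  | nil => simp [word] at hx
  | node _ L R ihL _ =>
    rcases hL : word L with _ | ⟨y, l⟩
    · obtain rfl := word_eq_nil_iff.1 hL
      simp_all [word, firstRank]
    · have hy : y + firstRank L = L.numNodes := ihL (by simp [hL])
      simp only [word, hL, List.map_cons, List.cons_append, List.head?_cons, Option.mem_some_iff]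
        at hx
      simp only [firstRank, numNodes]
      omega

theorem add_lastRank_of_mem_getLast? {t : BinaryTree Unit} {x : ℕ}
    (hx : x ∈ (word t).getLast?) : x + lastRank t = t.numNodes := by
  induction t generalizing x with
  | nil => simp [word] at hx
  | node _ L R _ ihR =>
    rcases hR : (word R).getLast? with _ | y
    · obtain rfl := word_eq_nil_iff.1 (List.getLast?_eq_none_iff.1 hR)
      simp_all [word, lastRank]
    · have hy : y + lastRank R = R.numNodes := ihR hR
      have hR_ne : R ≠ .nil := by rintro rfl; simp [word] at hR
      simp only [word, List.getLast?_append, List.getLast?_cons, hR, Option.getD_some,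
        Option.some_or, Option.mem_some_iff] at hx
      simp only [lastRank, hR_ne, if_false, numNodes]
      omega

theorem stepsLE_word_iff {m : ℕ} {t : BinaryTree Unit} : StepsLE m (word t) ↔ Bounded m t := by
  induction t with
  | nil => simp [word, Bounded, StepsLE]
  | node _ L R ihL ihR =>
    have last_step : (∀ x ∈ ((word L).map (R.numNodes + ·)).getLast?,
        |((L.numNodes + R.numNodes : ℕ) : ℤ) - x| ≤ m) ↔ lastRank L ≤ m := by
      rw [List.getLast?_map]
      rcases hL : (word L).getLast? with _ | x
      · simp [word_eq_nil_iff.1 (List.getLast?_eq_none_iff.1 hL), lastRank]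
      · have := add_lastRank_of_mem_getLast? hL
        simp only [Option.map_some, Option.mem_some_iff, forall_eq', abs_le]
        omega
    have first_step : (∀ y ∈ (word R).head?, |(y : ℤ) - (L.numNodes + R.numNodes : ℕ)| ≤ m) ↔
        (R ≠ .nil → firstRank R + L.numNodes ≤ m) := by
      rcases hR : (word R).head? with _ | y
      · simp [word_eq_nil_iff.1 (List.head?_eq_none_iff.1 hR)]
      · have hR_ne : R ≠ .nil := by rintro rfl; simp [word] at hR
        have := add_firstRank_of_mem_head? hR
        simp only [Option.mem_some_iff, forall_eq', abs_le, hR_ne, ne_eq, not_false_eq_true,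
          forall_const]
        omega
    rw [Bounded, ← ihL, ← ihR, ← last_step, ← first_step,
      ← stepsLE_map_add_iff (k := R.numNodes) (l := word L)]
    simp only [StepsLE, word, List.isChain_append, List.isChain_cons, List.head?_cons,
      Option.mem_some_iff, forall_eq']
    tauto

open Classical in
theorem aCount_eq_card_trees (m n : ℕ) :
    aCount m n = {t ∈ treesOfNumNodesEq n | Bounded m t}.card := by
  rw [aCount_eq_ncard_words, ← Set.ncard_coe_finset,
    ← Set.ncard_image_of_injective _ word_injective]
  congr 1
  ext l
  simp only [Finset.coe_filter, mem_treesOfNumNodesEq]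
  constructor
  · rintro ⟨hl, hav, hm⟩
    obtain ⟨t, rfl⟩ := exists_word_eq hl hav
    exact ⟨t, ⟨by simpa [length_word] using hl.length_eq, stepsLE_word_iff.1 hm⟩, rfl⟩
  · rintro ⟨t, ⟨rfl, hm⟩, rfl⟩
    exact ⟨word_perm_range t, avoidsWord_word t, stepsLE_word_iff.2 hm⟩

end Trees

section WeightedCount

/-- The contribution of the tree `t` to `weightedCount m f`: the weight `f` evaluated at the ranks
of the first and last letters of `word t`, or `0` if `t` is not `Bounded`. -/
noncomputable def weight (m : ℕ) (f : ℕ → ℕ → ℚ) (t : BinaryTree Unit) : ℚ :=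
  open Classical in if Bounded m t then f (firstRank t) (lastRank t) else 0

/-- The number of `m`-bounded 132-avoiders of length `n`, where an avoider counts with weight
`f i j` if its first and last letters have ranks `i` and `j`, counted from the top. -/
noncomputable def weightedCount (m : ℕ) (f : ℕ → ℕ → ℚ) (n : ℕ) : ℚ :=
  ∑ t ∈ treesOfNumNodesEq n, weight m f t

theorem aCount_eq_weightedCount (m n : ℕ) :
    (aCount m n : ℚ) = weightedCount m (fun _ _ ↦ 1) n := by
  simp [aCount_eq_card_trees, weightedCount, weight]

theorem firstRank_pos {t : BinaryTree Unit} (ht : t ≠ .nil) : 0 < firstRank t := by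
  cases t <;> simp_all [firstRank]

theorem lastRank_pos {t : BinaryTree Unit} (ht : t ≠ .nil) : 0 < lastRank t := by
  cases t with
  | nil => exact absurd rfl ht
  | node _ L R => rw [lastRank]; split_ifs <;> omega

theorem ne_nil_of_mem_treesOfNumNodesEq {n : ℕ} (hn : 0 < n) {t : BinaryTree Unit}
    (ht : t ∈ treesOfNumNodesEq n) : t ≠ .nil := by
  rintro rfl
  exact hn.ne (mem_treesOfNumNodesEq.1 ht)

theorem weight_congr {m : ℕ} {f g : ℕ → ℕ → ℚ} {t : BinaryTree Unit} (ht : t ≠ .nil)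
    (h : ∀ i j, 0 < i → 0 < j → f i j = g i j) : weight m f t = weight m g t := by
  rw [weight, weight, h _ _ (firstRank_pos ht) (lastRank_pos ht)]

theorem weightedCount_congr {m n : ℕ} {f g : ℕ → ℕ → ℚ} (hn : 0 < n)
    (h : ∀ i j, 0 < i → 0 < j → f i j = g i j) : weightedCount m f n = weightedCount m g n :=
  Finset.sum_congr rfl fun _ ht ↦ weight_congr (ne_nil_of_mem_treesOfNumNodesEq hn ht) h

theorem weightedCount_zero_weight (m n : ℕ) : weightedCount m (fun _ _ ↦ 0) n = 0 := by
  simp [weightedCount, weight]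

theorem weightedCount_sum_mul {ι : Type*} (s : Finset ι) (c : ι → ℚ) (f : ι → ℕ → ℕ → ℚ)
    (m n : ℕ) :
    weightedCount m (fun i j ↦ ∑ x ∈ s, c x * f x i j) n =
      ∑ x ∈ s, c x * weightedCount m (f x) n := by
  simp only [weightedCount, Finset.mul_sum]
  rw [Finset.sum_comm]
  refine Finset.sum_congr rfl fun t _ ↦ ?_
  simp only [weight]
  split_ifs <;> simp

/-- The weight seen by the left subtree of a tree of weight `f` whose right subtree is empty. -/
def leftWeight (m : ℕ) (f : ℕ → ℕ → ℚ) (i j : ℕ) : ℚ := if j ≤ m then f (i + 1) 1 else 0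

/-- The weight seen by the nonempty right subtree of a tree of weight `f` with left subtree `L`. -/
def rightWeight (m : ℕ) (L : BinaryTree Unit) (f : ℕ → ℕ → ℚ) (i j : ℕ) : ℚ :=
  if i + L.numNodes ≤ m then f (firstRank L + 1) (j + L.numNodes + 1) else 0

open Classical in
theorem weight_node_nil (m : ℕ) (f : ℕ → ℕ → ℚ) (L : BinaryTree Unit) :
    weight m f (L △ .nil) = weight m (leftWeight m f) L := by
  rw [weight, weight, leftWeight, ← ite_and]
  exact if_congr (by simp [Bounded]) (by simp [firstRank, lastRank]) rfl

open Classical in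
theorem weight_node (m : ℕ) (f : ℕ → ℕ → ℚ) (L : BinaryTree Unit) {R : BinaryTree Unit}
    (hR : R ≠ .nil) :
    weight m f (L △ R) =
      if Bounded m L ∧ lastRank L ≤ m then weight m (rightWeight m L f) R else 0 := by
  simp only [weight, rightWeight, Bounded, firstRank, lastRank]
  split_ifs <;> simp_all

theorem weight_rightWeight_eq_zero {m : ℕ} {L R : BinaryTree Unit} (f : ℕ → ℕ → ℚ)
    (hL : m ≤ L.numNodes) (hR : R ≠ .nil) : weight m (rightWeight m L f) R = 0 := by
  have : ¬ firstRank R + L.numNodes ≤ m := by have := firstRank_pos hR; omega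
  simp [weight, rightWeight, this]

theorem sum_treesOfNumNodesEq_succ {M : Type*} [AddCommMonoid M] (f : BinaryTree Unit → M)
    (n : ℕ) :
    ∑ t ∈ treesOfNumNodesEq (n + 1), f t =
      ∑ l ∈ Finset.range (n + 1), ∑ L ∈ treesOfNumNodesEq l, ∑ R ∈ treesOfNumNodesEq (n - l),
        f (L △ R) := by
  rw [treesOfNumNodesEq_succ, Finset.sum_biUnion,
    ← Finset.Nat.sum_antidiagonal_eq_sum_range_succ
      fun l r ↦ ∑ L ∈ treesOfNumNodesEq l, ∑ R ∈ treesOfNumNodesEq r, f (L △ R)]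
  · refine Finset.sum_congr rfl fun _ _ ↦ ?_
    rw [Finset.sum_map, Finset.sum_product]
    rfl
  · simp_rw [Set.PairwiseDisjoint, Set.Pairwise, Finset.disjoint_left]
    aesop

open Classical in
theorem weightedCount_succ {m n : ℕ} (hmn : m ≤ n) (f : ℕ → ℕ → ℚ) :
    weightedCount m f (n + 1) = weightedCount m (leftWeight m f) n +
      ∑ l ∈ Finset.range m, ∑ L ∈ treesOfNumNodesEq l with Bounded m L ∧ lastRank L ≤ m,
        weightedCount m (rightWeight m L f) (n - l) := by
  have sum_right : ∀ l ∈ Finset.range n,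
      ∑ L ∈ treesOfNumNodesEq l, ∑ R ∈ treesOfNumNodesEq (n - l), weight m f (L △ R) =
        ∑ L ∈ treesOfNumNodesEq l with Bounded m L ∧ lastRank L ≤ m,
          weightedCount m (rightWeight m L f) (n - l) := by
    intro l hl
    rw [Finset.sum_filter]
    refine Finset.sum_congr rfl fun L _ ↦ ?_
    rw [weightedCount, Finset.sum_congr rfl fun R hR ↦ weight_node m f L <|
      ne_nil_of_mem_treesOfNumNodesEq (Nat.sub_pos_of_lt (Finset.mem_range.1 hl)) hR]
    split_ifs <;> simp
  have sum_right_eq_zero : ∀ l ∈ Finset.range n, l ∉ Finset.range m →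
      ∑ L ∈ treesOfNumNodesEq l with Bounded m L ∧ lastRank L ≤ m,
        weightedCount m (rightWeight m L f) (n - l) = 0 := by
    intro l hln hlm
    refine Finset.sum_eq_zero fun L hL ↦ Finset.sum_eq_zero fun R hR ↦ ?_
    have hL_card : L.numNodes = l := mem_treesOfNumNodesEq.1 (Finset.mem_filter.1 hL).1
    exact weight_rightWeight_eq_zero f (hL_card ▸ not_lt.1 (Finset.mem_range.not.1 hlm)) <|
      ne_nil_of_mem_treesOfNumNodesEq (Nat.sub_pos_of_lt (Finset.mem_range.1 hln)) hR
  rw [weightedCount, sum_treesOfNumNodesEq_succ, Finset.sum_range_succ, add_comm,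
    Finset.sum_congr rfl sum_right,
    ← Finset.sum_subset (Finset.range_subset_range.2 hmn) sum_right_eq_zero]
  simp [weightedCount, weight_node_nil]

end WeightedCount

section OneBounded

theorem weightedCount_one_succ {n : ℕ} (hn : 0 < n) (f : ℕ → ℕ → ℚ) :
    weightedCount 1 f (n + 1) =
      weightedCount 1 (leftWeight 1 f) n + weightedCount 1 (rightWeight 1 .nil f) n := by
  simp [weightedCount_succ hn, Finset.filter_singleton, Bounded, lastRank]

theorem aCount_one_succ {n : ℕ} (hn : 2 ≤ n) : aCount 1 (n + 1) = aCount 1 n := by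
  have last_const (k : ℕ) (hk : 0 < k) : weightedCount 1 (leftWeight 1 fun _ _ ↦ 1) (k + 1) =
      weightedCount 1 (leftWeight 1 fun _ _ ↦ 1) k := by
    have right_eq_zero :
        weightedCount 1 (rightWeight 1 .nil (leftWeight 1 fun _ _ ↦ 1)) k = 0 := by
      rw [weightedCount_congr hk (g := fun _ _ ↦ 0), weightedCount_zero_weight]
      simp +contextual [rightWeight, leftWeight, Nat.pos_iff_ne_zero]
    rw [weightedCount_one_succ hk, right_eq_zero, add_zero]
    exact weightedCount_congr hk fun i j _ _ ↦ by simp [leftWeight]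
  have first_const (k : ℕ) (hk : 0 < k) :
      weightedCount 1 (rightWeight 1 .nil fun _ _ ↦ 1) (k + 1) =
        weightedCount 1 (rightWeight 1 .nil fun _ _ ↦ 1) k := by
    have left_eq_zero :
        weightedCount 1 (leftWeight 1 (rightWeight 1 .nil fun _ _ ↦ 1)) k = 0 := by
      rw [weightedCount_congr hk (g := fun _ _ ↦ 0), weightedCount_zero_weight]
      simp +contextual [rightWeight, leftWeight, Nat.pos_iff_ne_zero]
    rw [weightedCount_one_succ hk, left_eq_zero, zero_add]
    exact weightedCount_congr hk fun i j _ _ ↦ by simp [rightWeight, firstRank]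
  obtain ⟨k, rfl⟩ := Nat.exists_eq_add_of_le' (one_le_two.trans hn)
  have hk : 0 < k := by omega
  have : (aCount 1 (k + 1 + 1) : ℚ) = aCount 1 (k + 1) := by
    rw [aCount_eq_weightedCount, aCount_eq_weightedCount, weightedCount_one_succ k.succ_pos,
      last_const k hk, first_const k hk, ← weightedCount_one_succ hk]
  exact_mod_cast this

end OneBounded

section LinearRecurrence

variable {K : Type*} [Field K]

theorem funLeft_succ_pow_apply (k : ℕ) (u : ℕ → K) (n : ℕ) :
    (LinearMap.funLeft K K Nat.succ ^ k) u n = u (n + k) := by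
  induction k generalizing n with
  | zero => rfl
  | succ k ih => rw [pow_succ', Module.End.mul_apply, LinearMap.funLeft_apply, ih]; congr 1; omega

open Polynomial in
theorem exists_linear_recurrence_of_shift_mem {V : Submodule K (ℕ → K)} [FiniteDimensional K V]
    (shift_mem : ∀ u ∈ V, (fun n ↦ u (n + 1)) ∈ V) {d : ℕ} (hd : Module.finrank K V ≤ d) :
    ∃ c : ℕ → K, ∀ u ∈ V, ∀ n, u (n + d) = ∑ i ∈ Finset.Icc 1 d, c i * u (n + d - i) := by
  have funLeft_mem : ∀ u ∈ V, LinearMap.funLeft K K Nat.succ u ∈ V := shift_mem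
  let T : V →ₗ[K] V := (LinearMap.funLeft K K Nat.succ).restrict funLeft_mem
  let p : K[X] := T.charpoly * X ^ (d - Module.finrank K V)
  have p_monic : p.Monic := T.charpoly_monic.mul (monic_X_pow _)
  have p_natDegree : p.natDegree = d := by
    rw [T.charpoly_monic.natDegree_mul (monic_X_pow _), LinearMap.charpoly_natDegree,
      natDegree_X_pow, Nat.add_sub_cancel' hd]
  have p_coeff : p.coeff d = 1 := p_natDegree ▸ p_monic
  have aeval_p : aeval T p = 0 := by simp [p, LinearMap.aeval_self_charpoly]
  refine ⟨fun i ↦ -p.coeff (d - i), fun u hu n ↦ ?_⟩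
  have T_pow_apply (k : ℕ) : ((T ^ k) ⟨u, hu⟩ : ℕ → K) n = u (n + k) := by
    rw [Module.End.pow_restrict, ← funLeft_succ_pow_apply k u]
    rfl
  have sum_eq_zero : ∑ k ∈ Finset.range (d + 1), p.coeff k * u (n + k) = 0 := by
    have := congrArg (fun S : V →ₗ[K] V ↦ (S ⟨u, hu⟩ : ℕ → K) n) aeval_p
    simpa [aeval_eq_sum_range, p_natDegree, LinearMap.sum_apply, T_pow_apply] using this
  rw [← Finset.sum_flip, Finset.range_eq_Ico, Finset.sum_eq_sum_Ico_succ_bot d.succ_pos,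
    Nat.sub_zero, p_coeff, one_mul] at sum_eq_zero
  rw [eq_neg_of_add_eq_zero_left sum_eq_zero, ← Finset.sum_neg_distrib]
  refine Finset.sum_congr rfl fun i hi ↦ ?_
  rw [neg_mul, Nat.add_sub_assoc (Finset.mem_Icc.1 hi).2]

end LinearRecurrence

section StateSpace

/-- The weights `f` that vanish once the first rank exceeds `k` and do not depend on the last rank
beyond `k`. -/
structure IsTruncated (k : ℕ) (f : ℕ → ℕ → ℚ) : Prop where
  eq_zero : ∀ i j, k < i → f i j = 0
  eq_last : ∀ i j, k < j → f i j = f i (k + 1)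

theorem IsTruncated.mono {k l : ℕ} {f : ℕ → ℕ → ℚ} (hf : IsTruncated k f) (hkl : k ≤ l) :
    IsTruncated l f where
  eq_zero i j hi := hf.eq_zero i j (hkl.trans_lt hi)
  eq_last i j hj := by rw [hf.eq_last i j (by omega), hf.eq_last i (l + 1) (by omega)]

theorem isTruncated_leftWeight {m : ℕ} {f : ℕ → ℕ → ℚ} (hf : IsTruncated m f) :
    IsTruncated m (leftWeight m f) where
  eq_zero i j hi := by simp [leftWeight, hf.eq_zero (i + 1) 1 (by omega)]
  eq_last i j hj := by simp [leftWeight, hj.not_ge]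

theorem isTruncated_rightWeight {m : ℕ} {f : ℕ → ℕ → ℚ}
    (hf : ∀ i j, m < j → f i j = f i (m + 1)) (L : BinaryTree Unit) (hL : L.numNodes ≤ m) :
    IsTruncated (m - L.numNodes) (rightWeight m L f) where
  eq_zero i j hi := if_neg (by omega)
  eq_last i j hj := by
    rw [rightWeight, rightWeight, hf _ (j + L.numNodes + 1) (by omega),
      hf _ (m - L.numNodes + 1 + L.numNodes + 1) (by omega)]

/-- The weight of the avoiders with first rank `i + 1` and last rank `j + 1`, where all last ranks
beyond `k` are identified with `k + 1`. -/
def basicWeight (k i j a b : ℕ) : ℚ := if a = i + 1 ∧ min b (k + 1) = j + 1 then 1 else 0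

theorem isTruncated_basicWeight {k i : ℕ} (hi : i < k) (j : ℕ) :
    IsTruncated k (basicWeight k i j) where
  eq_zero a b ha := if_neg (by omega)
  eq_last a b hb := by simp [basicWeight, min_eq_right (Nat.succ_le_of_lt hb)]

theorem IsTruncated.eq_sum_basicWeight {k : ℕ} {f : ℕ → ℕ → ℚ} (hf : IsTruncated k f) {a b : ℕ}
    (ha : 0 < a) (hb : 0 < b) :
    f a b = ∑ p : Fin k × Fin (k + 1), f (p.1 + 1) (p.2 + 1) * basicWeight k p.1 p.2 a b := by
  rcases le_or_gt a k with hak | hak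
  · rw [Fintype.sum_eq_single (⟨a - 1, by omega⟩, ⟨min b (k + 1) - 1, by omega⟩)]
    · have ha_eq : a - 1 + 1 = a := by omega
      have hb_eq : min b (k + 1) - 1 + 1 = min b (k + 1) := by omega
      simp only [basicWeight, ha_eq, hb_eq, and_self, if_true, mul_one]
      rcases le_or_gt b (k + 1) with hbk | hbk
      · rw [min_eq_left hbk]
      · rw [min_eq_right hbk.le, hf.eq_last a b (by omega)]
    · rintro ⟨i, j⟩ hij
      rw [basicWeight, if_neg, mul_zero]
      rintro ⟨hi, hj⟩
      exact hij (Prod.ext (Fin.ext (Nat.eq_sub_of_add_eq hi.symm))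
        (Fin.ext (Nat.eq_sub_of_add_eq hj.symm)))
  · rw [hf.eq_zero a b hak, Finset.sum_eq_zero]
    rintro ⟨i, j⟩ -
    rw [(isTruncated_basicWeight i.2 _).eq_zero a b hak, mul_zero]

/-- The indices of the states: `none` stands for the avoiders with last rank at most `m`, and
`some ⟨k, i, j⟩` for `basicWeight k i j`. -/
abbrev State (m : ℕ) : Type := Option (Σ k : Fin (m + 1), Fin k × Fin (k + 1))

/-- The sequence counting the avoiders in a given state. It is shifted by the level `k` of the
state because the recurrence for weights of level `m` at length `n + m` involves weights of level
`k` at length `n + k`. -/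
noncomputable def stateSeq (m : ℕ) : State m → ℕ → ℚ
  | none, n => weightedCount m (fun _ j ↦ if j ≤ m then 1 else 0) (n + m)
  | some ⟨k, i, j⟩, n => weightedCount m (basicWeight k i j) (n + k)

/-- The span of the sequences attached to the states. -/
noncomputable def stateSpace (m : ℕ) : Submodule ℚ (ℕ → ℚ) :=
  Submodule.span ℚ (Set.range (stateSeq m))

theorem IsTruncated.weightedCount_mem_stateSpace {m k : ℕ} {f : ℕ → ℕ → ℚ}
    (hf : IsTruncated k f) (hk : 0 < k) (hkm : k ≤ m) :
    (fun n ↦ weightedCount m f (n + k)) ∈ stateSpace m := by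
  have sum_eq : (fun n ↦ weightedCount m f (n + k)) =
      ∑ p : Fin k × Fin (k + 1),
        f (p.1 + 1) (p.2 + 1) • stateSeq m (some ⟨⟨k, by omega⟩, p⟩) := by
    ext n
    simp only [Finset.sum_apply, Pi.smul_apply, smul_eq_mul, stateSeq]
    rw [← weightedCount_sum_mul]
    exact weightedCount_congr (by omega) fun a b ha hb ↦ hf.eq_sum_basicWeight ha hb
  rw [sum_eq]
  exact Submodule.sum_mem _ fun p _ ↦
    Submodule.smul_mem _ _ (Submodule.subset_span (Set.mem_range_self _))

theorem weightedCount_succ_mem_stateSpace {m : ℕ} {f : ℕ → ℕ → ℚ}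
    (hf : ∀ i j, m < j → f i j = f i (m + 1))
    (hleft : (fun n ↦ weightedCount m (leftWeight m f) (n + m)) ∈ stateSpace m) :
    (fun n ↦ weightedCount m f (n + 1 + m)) ∈ stateSpace m := by
  classical
  have succ_eq : (fun n ↦ weightedCount m f (n + 1 + m)) =
      (fun n ↦ weightedCount m (leftWeight m f) (n + m)) +
        ∑ l ∈ Finset.range m, ∑ L ∈ treesOfNumNodesEq l with Bounded m L ∧ lastRank L ≤ m,
          fun n ↦ weightedCount m (rightWeight m L f) (n + (m - l)) := by
    ext n
    rw [Nat.add_right_comm, weightedCount_succ (Nat.le_add_left m n)]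
    simp only [Pi.add_apply, Finset.sum_apply]
    congr 1
    refine Finset.sum_congr rfl fun l hl ↦ ?_
    rw [Nat.add_sub_assoc (Finset.mem_range.1 hl).le]
  rw [succ_eq]
  refine Submodule.add_mem _ hleft <|
    Submodule.sum_mem _ fun l hl ↦ Submodule.sum_mem _ fun L hL ↦ ?_
  obtain rfl : L.numNodes = l := mem_treesOfNumNodesEq.1 (Finset.mem_filter.1 hL).1
  have hL_lt : L.numNodes < m := Finset.mem_range.1 hl
  exact (isTruncated_rightWeight hf L hL_lt.le).weightedCount_mem_stateSpace
    (Nat.sub_pos_of_lt hL_lt) (Nat.sub_le _ _)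

theorem leftWeight_of_apply_one {m : ℕ} {f : ℕ → ℕ → ℚ} (hf : ∀ i, f i 1 = 1) :
    leftWeight m f = fun _ j ↦ if j ≤ m then 1 else 0 := by
  ext i j
  simp [leftWeight, hf]

theorem weightedCount_succ_mem_stateSpace_of_apply_one {m : ℕ} {f : ℕ → ℕ → ℚ}
    (hf : ∀ i j, m < j → f i j = f i (m + 1)) (hf_one : ∀ i, f i 1 = 1) :
    (fun n ↦ weightedCount m f (n + 1 + m)) ∈ stateSpace m :=
  weightedCount_succ_mem_stateSpace hf <| by
    rw [leftWeight_of_apply_one hf_one]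
    exact Submodule.subset_span ⟨none, rfl⟩

theorem stateSeq_succ_mem_stateSpace {m : ℕ} (hm : 0 < m) (s : State m) :
    (fun n ↦ stateSeq m s (n + 1)) ∈ stateSpace m := by
  rcases s with _ | ⟨⟨k, hk⟩, i, j⟩
  · exact weightedCount_succ_mem_stateSpace_of_apply_one (fun _ j hj ↦ by simp [hj.not_ge])
      fun _ ↦ if_pos hm
  · have hf := isTruncated_basicWeight i.2 j
    rcases (Nat.lt_succ_iff.1 hk).eq_or_lt with rfl | hkm
    · exact weightedCount_succ_mem_stateSpace hf.eq_last
        ((isTruncated_leftWeight hf).weightedCount_mem_stateSpace hm le_rfl)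
    · simp only [stateSeq, Nat.add_right_comm _ 1]
      exact (hf.mono k.le_succ).weightedCount_mem_stateSpace k.succ_pos hkm

theorem shift_mem_stateSpace {m : ℕ} (hm : 0 < m) {u : ℕ → ℚ} (hu : u ∈ stateSpace m) :
    (fun n ↦ u (n + 1)) ∈ stateSpace m := by
  have span_le : stateSpace m ≤ (stateSpace m).comap (LinearMap.funLeft ℚ ℚ Nat.succ) :=
    Submodule.span_le.2 <| Set.range_subset_iff.2 <| stateSeq_succ_mem_stateSpace hm
  exact span_le hu

theorem aCount_mem_stateSpace (m : ℕ) :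
    (fun n ↦ (aCount m (n + 1 + m) : ℚ)) ∈ stateSpace m := by
  simp only [aCount_eq_weightedCount]
  exact weightedCount_succ_mem_stateSpace_of_apply_one (fun _ _ _ ↦ rfl) fun _ ↦ rfl

theorem three_mul_card_state (m : ℕ) :
    3 * Fintype.card (State m) = m * (m + 1) * (m + 2) + 3 := by
  have three_mul_sum : 3 * ∑ k ∈ Finset.range (m + 1), k * (k + 1) = m * (m + 1) * (m + 2) := by
    induction m with
    | zero => rfl
    | succ m ih => rw [Finset.sum_range_succ, mul_add, ih]; ring
  rw [← three_mul_sum, ← Fin.sum_univ_eq_sum_range fun k ↦ k * (k + 1)]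
  simp [mul_add]

theorem card_state_le_dOrder {m : ℕ} (hm : 2 ≤ m) : Fintype.card (State m) ≤ dOrder m := by
  have hcard := three_mul_card_state m
  have two_dvd : 2 ∣ m * (m - 1) * (m + 2) := (Nat.even_mul_pred_self m).two_dvd.mul_right _
  have half_mul_two := Nat.div_mul_cancel two_dvd
  rw [dOrder]
  obtain ⟨k, rfl⟩ := Nat.exists_eq_add_of_le' hm
  rw [show k + 2 - 1 = k + 1 from rfl] at half_mul_two ⊢
  nlinarith [Nat.zero_le (k ^ 3), Nat.zero_le (k ^ 2)]

theorem exists_linear_recurrence {m d : ℕ} (hm : 0 < m) (hd : Fintype.card (State m) ≤ d) :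
    ∃ c : ℕ → ℚ, ∃ N : ℕ, ∀ n : ℕ, N ≤ n →
      (aCount m n : ℚ) = ∑ i ∈ Finset.Icc 1 d, c i * (aCount m (n - i) : ℚ) := by
  have : FiniteDimensional ℚ (stateSpace m) :=
    FiniteDimensional.span_of_finite ℚ (Set.finite_range _)
  obtain ⟨c, hc⟩ := exists_linear_recurrence_of_shift_mem (fun _ ↦ shift_mem_stateSpace hm)
    ((finrank_range_le_card (stateSeq m)).trans hd)
  refine ⟨c, d + 1 + m, fun n hn ↦ ?_⟩
  obtain ⟨k, rfl⟩ := Nat.exists_eq_add_of_le' hn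
  rw [← add_assoc, ← add_assoc, hc _ (aCount_mem_stateSpace m) k]
  refine Finset.sum_congr rfl fun i hi ↦ ?_
  have := (Finset.mem_Icc.1 hi).2
  congr 3
  omega

end StateSpace

end BoundedAvoider

theorem recurrence_order_bound :
    (∃ c : ℚ, ∃ N : ℕ, ∀ n : ℕ, N ≤ n → (aCount 1 n : ℚ) = c * (aCount 1 (n - 1) : ℚ)) ∧
    (∀ m : ℕ, 2 ≤ m → ∃ c : ℕ → ℚ, ∃ N : ℕ, ∀ n : ℕ, N ≤ n →
      (aCount m n : ℚ) = ∑ i ∈ Finset.Icc 1 (dOrder m), c i * (aCount m (n - i) : ℚ)) := by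
  refine ⟨⟨1, 3, fun n hn ↦ ?_⟩, fun m hm ↦ ?_⟩
  · obtain ⟨k, rfl⟩ := Nat.exists_eq_add_of_le' (Nat.le_of_lt (Nat.lt_of_succ_lt hn))
    rw [Nat.add_sub_cancel, BoundedAvoider.aCount_one_succ (Nat.le_of_succ_le_succ hn), one_mul]
  · exact BoundedAvoider.exists_linear_recurrence (two_pos.trans_le hm)
      (BoundedAvoider.card_state_le_dOrder hm)
end

section
/- For m = 2, the generating function satisfies the formal power series identity (1 − x)²(1 − x − x³) · Σ_{n≥0} a_n^{(2)} x^n = 1 − 2x + 2x² − x⁴ − x⁶. In particular, a_0^{(2)}, a_1^{(2)}, a_2^{(2)}, … = 1, 1, 2, 5, 8, 12, 18, 26, 37, 53, 76, 109, …. -/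
/-! In a 132-avoider every entry before the maximum exceeds every entry after it. For `m = 2` this
forces the maximum to be first, last, or second and preceded by the second largest entry. Let `hₙ`
count the permutations that start with one of their two largest entries and `eₙ` those that end
with their maximum. Exactly one permutation of each length starts with its maximum and ends with
one of its two largest entries: a zigzag descending through every other value and ascending
through the rest. Hence `hₙ₊₃ = hₙ₊₂ + hₙ + 1` by removal of the maximum and, for `n ≥ 2`,
`eₙ₊₁ = eₙ + 1` and `aₙ = hₙ + eₙ - 1` by inclusion–exclusion. So `a` satisfies the recurrence of
`h` up to a linear inhomogeneity, which the factor `(1 - x)²` turns into a polynomial. -/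

open Finset List

/-- Decidability of `List.Triplewise` lets `decide` enumerate `boundedAv132 m n` for small `n`. -/
instance decidableTriplewise {α : Type*} (p : α → α → α → Prop) [∀ a b c, Decidable (p a b c)] :
    DecidablePred (List.Triplewise p)
  | [] => isTrue .nil
  | _ :: l =>
    have := decidableTriplewise p l
    decidable_of_iff' _ triplewise_cons

/-- The `m`-bounded 132-avoiding permutations of length `n`, in one-line notation. As in the
encoding by `Equiv.Perm (Fin n)`, the entries are `0, …, n - 1`. -/
def boundedAv132 (m n : ℕ) : Finset (List ℕ) :=
  {l ∈ (List.range n).permutations'.toFinset |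
    l.Triplewise (fun a b c ↦ ¬(a < c ∧ c < b)) ∧ l.IsChain (fun a b ↦ a ≤ b + m ∧ b ≤ a + m)}

section Encoding

variable {m n : ℕ} {l : List ℕ}

theorem mem_boundedAv132 :
    l ∈ boundedAv132 m n ↔ l ~ List.range n ∧ l.Triplewise (fun a b c ↦ ¬(a < c ∧ c < b)) ∧
      l.IsChain (fun a b ↦ a ≤ b + m ∧ b ≤ a + m) := by
  simp [boundedAv132]

/-- The one-line notation of a permutation, as a list. -/
def oneLine (π : Equiv.Perm (Fin n)) : List ℕ := List.ofFn fun i ↦ (π i : ℕ)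

theorem oneLine_injective : Function.Injective (oneLine (n := n)) := fun _ _ h ↦
  Equiv.ext fun i ↦ Fin.ext (congrFun (List.ofFn_injective h) i)

theorem oneLine_perm_range (π : Equiv.Perm (Fin n)) : oneLine π ~ List.range n := by
  simpa [oneLine, Function.comp_def, List.ofFn_eq_map] using π.ofFn_comp_perm (Fin.val)

theorem exists_oneLine_eq (h : l ~ List.range n) : ∃ π : Equiv.Perm (Fin n), oneLine π = l := by
  obtain rfl : l.length = n := by simpa using h.length_eq
  have entry_lt (i : Fin l.length) : l.get i < l.length :=
    List.mem_range.1 (h.subset (l.get_mem i))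
  have nodup : l.Nodup := h.nodup_iff.2 List.nodup_range
  have injective : Function.Injective fun i ↦ (⟨l.get i, entry_lt i⟩ : Fin l.length) :=
    fun i j hij ↦ nodup.injective_get (Fin.ext_iff.1 hij)
  exact ⟨.ofBijective _ (Finite.injective_iff_bijective.1 injective), List.ofFn_get l⟩

theorem triplewise_oneLine_iff (π : Equiv.Perm (Fin n)) :
    (oneLine π).Triplewise (fun a b c ↦ ¬(a < c ∧ c < b)) ↔ Avoids132 π := by
  simp only [triplewise_iff_getElem, oneLine, List.length_ofFn, List.getElem_ofFn, Avoids132,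
    Fin.val_fin_lt]
  constructor
  · rintro h ⟨i, j, k, hij, hjk, hπ⟩
    exact h i j k hij hjk k.isLt hπ
  · exact fun h i j k hij hjk hk hπ ↦
      h ⟨⟨i, by lia⟩, ⟨j, by lia⟩, ⟨k, hk⟩, hij, hjk, hπ⟩

theorem isChain_oneLine_iff (π : Equiv.Perm (Fin n)) :
    (oneLine π).IsChain (fun a b ↦ a ≤ b + m ∧ b ≤ a + m) ↔ MBounded m π := by
  rw [oneLine, List.isChain_ofFn, MBounded]
  refine forall₂_congr fun i hi ↦ ?_
  rw [abs_le]
  lia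

theorem oneLine_mem_boundedAv132 (π : Equiv.Perm (Fin n)) :
    oneLine π ∈ boundedAv132 m n ↔ Avoids132 π ∧ MBounded m π := by
  rw [mem_boundedAv132, triplewise_oneLine_iff, isChain_oneLine_iff,
    and_iff_right (oneLine_perm_range π)]

theorem aCount_eq_card_boundedAv132 (m n : ℕ) : aCount m n = #(boundedAv132 m n) := by
  rw [aCount, ← Nat.card_eq_finsetCard]
  refine Nat.card_eq_of_bijective
    (fun π ↦ ⟨oneLine π.1, (oneLine_mem_boundedAv132 π.1).2 π.2⟩) ⟨fun π σ h ↦ ?_, fun l ↦ ?_⟩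
  · exact Subtype.ext (oneLine_injective (Subtype.ext_iff.1 h))
  · obtain ⟨π, hπ⟩ := exists_oneLine_eq (mem_boundedAv132.1 l.2).1
    exact ⟨⟨π, (oneLine_mem_boundedAv132 π).1 (hπ ▸ l.2)⟩, Subtype.ext hπ⟩

end Encoding

section Ends

/-- The permutations in `boundedAv132 m n` whose first entry, if any, is at least `j`. -/
def headGE (m n j : ℕ) : Finset (List ℕ) := {l ∈ boundedAv132 m n | ∀ a ∈ l.head?, j ≤ a}

/-- The permutations in `boundedAv132 m n` whose last entry, if any, is at least `j`. -/
def lastGE (m n j : ℕ) : Finset (List ℕ) := {l ∈ boundedAv132 m n | ∀ a ∈ l.getLast?, j ≤ a}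

variable {m n j : ℕ} {l : List ℕ}

theorem mem_headGE : l ∈ headGE m n j ↔ l ∈ boundedAv132 m n ∧ ∀ a ∈ l.head?, j ≤ a := by
  simp [headGE]

theorem mem_lastGE : l ∈ lastGE m n j ↔ l ∈ boundedAv132 m n ∧ ∀ a ∈ l.getLast?, j ≤ a := by
  simp [lastGE]

end Ends

section Structure

variable {m n : ℕ} {l t : List ℕ}

theorem length_of_mem_boundedAv132 (hl : l ∈ boundedAv132 m n) : l.length = n := by
  simpa using (mem_boundedAv132.1 hl).1.length_eq

theorem lt_of_mem_boundedAv132 (hl : l ∈ boundedAv132 m n) {a : ℕ} (ha : a ∈ l) : a < n :=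
  List.mem_range.1 ((mem_boundedAv132.1 hl).1.subset ha)

theorem nodup_of_mem_boundedAv132 (hl : l ∈ boundedAv132 m n) : l.Nodup :=
  (mem_boundedAv132.1 hl).1.nodup_iff.2 List.nodup_range

theorem exists_cons_of_mem_boundedAv132 (hl : l ∈ boundedAv132 m (n + 1)) :
    ∃ a t, l = a :: t ∧ a ≤ n := by
  obtain ⟨a, t, rfl⟩ := List.exists_cons_of_length_eq_add_one (length_of_mem_boundedAv132 hl)
  exact ⟨a, t, rfl, Nat.le_of_lt_succ (lt_of_mem_boundedAv132 hl List.mem_cons_self)⟩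

theorem exists_append_of_mem_boundedAv132 (hl : l ∈ boundedAv132 m (n + 1)) :
    ∃ t a, l = t ++ [a] ∧ a ≤ n := by
  have ne_nil : l ≠ [] := List.ne_nil_of_length_eq_add_one (length_of_mem_boundedAv132 hl)
  exact ⟨l.dropLast, l.getLast ne_nil, (List.dropLast_append_getLast ne_nil).symm,
    Nat.le_of_lt_succ (lt_of_mem_boundedAv132 hl (List.getLast_mem ne_nil))⟩

theorem cons_max_perm_range : n :: t ~ List.range (n + 1) ↔ t ~ List.range n := by
  rw [List.range_succ, (List.perm_append_singleton n _).congr_right, List.perm_cons]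

theorem append_max_perm_range : t ++ [n] ~ List.range (n + 1) ↔ t ~ List.range n := by
  rw [(List.perm_append_singleton n t).congr_left, cons_max_perm_range]

theorem pairwise_not132_of_forall_le {a : ℕ} (h : ∀ c ∈ t, c ≤ a) :
    t.Pairwise fun b c ↦ ¬(a < c ∧ c < b) :=
  List.pairwise_of_forall_mem_list fun _ _ c hc ↦ by
    have := h c hc
    lia

theorem cons_max_mem_boundedAv132 :
    n :: t ∈ boundedAv132 m (n + 1) ↔ t ∈ headGE m n (n - m) := by
  simp only [mem_headGE, Nat.sub_le_iff_le_add, mem_boundedAv132, cons_max_perm_range,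
    triplewise_cons, List.isChain_cons]
  constructor
  · rintro ⟨ht, ⟨-, av⟩, near, chain⟩
    exact ⟨⟨ht, av, chain⟩, fun a ha ↦ (near a ha).1⟩
  · rintro ⟨⟨ht, av, chain⟩, near⟩
    have lt {a : ℕ} (ha : a ∈ t) : a < n := List.mem_range.1 (ht.subset ha)
    refine ⟨ht, ⟨pairwise_not132_of_forall_le fun c hc ↦ (lt hc).le, av⟩, fun a ha ↦ ?_, chain⟩
    have := lt (List.mem_of_mem_head? ha)
    exact ⟨near a ha, by lia⟩

theorem append_max_mem_boundedAv132 :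
    t ++ [n] ∈ boundedAv132 m (n + 1) ↔ t ∈ lastGE m n (n - m) := by
  simp only [mem_lastGE, Nat.sub_le_iff_le_add, mem_boundedAv132, append_max_perm_range,
    triplewise_append, List.isChain_append]
  constructor
  · rintro ⟨ht, ⟨av, -⟩, chain, -, near⟩
    exact ⟨⟨ht, av, chain⟩, fun a ha ↦ (near a ha n (by simp)).2⟩
  · rintro ⟨⟨ht, av, chain⟩, near⟩
    have lt {a : ℕ} (ha : a ∈ t) : a < n := List.mem_range.1 (ht.subset ha)
    refine ⟨ht, ⟨av, by simp, by simp, ?_⟩, chain, by simp, ?_⟩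
    · simp only [List.mem_singleton, forall_eq]
      refine List.pairwise_of_forall_mem_list fun a _ b hb ↦ ?_
      have := lt hb
      lia
    · simp only [List.head?_cons, Option.mem_some_iff, forall_eq']
      intro a ha
      have := lt (List.mem_of_mem_getLast? ha)
      exact ⟨by lia, near a ha⟩

theorem cons_cons_max_mem_boundedAv132 (hm : 0 < m) :
    n :: (n + 1) :: t ∈ boundedAv132 m (n + 2) ↔ t ∈ headGE m n (n + 1 - m) := by
  have perm : n :: (n + 1) :: t ~ List.range (n + 2) ↔ t ~ List.range n := by
    rw [(List.Perm.swap (n + 1) n t).congr_left, cons_max_perm_range, cons_max_perm_range]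
  simp only [mem_headGE, Nat.sub_le_iff_le_add, mem_boundedAv132, perm, triplewise_cons,
    List.isChain_cons, List.pairwise_cons, List.head?_cons, Option.mem_some_iff, forall_eq']
  constructor
  · rintro ⟨ht, ⟨-, -, av⟩, -, near, chain⟩
    exact ⟨⟨ht, av, chain⟩, fun a ha ↦ (near a ha).1⟩
  · rintro ⟨⟨ht, av, chain⟩, near⟩
    have lt {a : ℕ} (ha : a ∈ t) : a < n := List.mem_range.1 (ht.subset ha)
    refine ⟨ht, ⟨⟨fun a ha ↦ ?_, pairwise_not132_of_forall_le fun c hc ↦ (lt hc).le⟩,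
      pairwise_not132_of_forall_le fun c hc ↦ (lt hc).le.trans n.le_succ, av⟩, by lia,
      fun a ha ↦ ?_, chain⟩
    · have := lt ha
      lia
    · have := lt (List.mem_of_mem_head? ha)
      exact ⟨near a ha, by lia⟩

/-- The entry `b` after the maximum `n` satisfies `n ≤ b + m`, and by 132-avoidance every entry
before `n` exceeds `b`. -/
theorem lt_add_of_append_max_cons_mem_boundedAv132 {s : List ℕ} {b : ℕ}
    (h : s ++ n :: b :: t ∈ boundedAv132 m (n + 1)) {a : ℕ} (ha : a ∈ s) : n < a + m := by
  have ⟨_, av, chain⟩ := mem_boundedAv132.1 h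
  have b_lt_a : b < a := by
    have not132 : ¬(a < b ∧ b < n) :=
      (List.pairwise_cons.1 ((triplewise_append.1 av).2.2.1 a ha)).1 b List.mem_cons_self
    have nodup := nodup_of_mem_boundedAv132 h
    simp only [List.nodup_append, List.nodup_cons, List.mem_cons] at nodup
    have a_ne_b : a ≠ b := nodup.2.2 a ha b (by simp)
    have b_le : b < n + 1 := lt_of_mem_boundedAv132 h (by simp)
    have b_ne : b ≠ n := by grind
    lia
  have near : n ≤ b + m := (List.isChain_append_cons_cons.1 chain).2.1.1
  lia

theorem boundedAv132_two_cases (hl : l ∈ boundedAv132 2 (n + 2)) :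
    (∃ t, l = (n + 1) :: t) ∨ (∃ t, l = t ++ [n + 1]) ∨ ∃ t, t ≠ [] ∧ l = n :: (n + 1) :: t := by
  have max_mem : n + 1 ∈ l := (mem_boundedAv132.1 hl).1.mem_iff.2 (by simp)
  obtain ⟨s, t, rfl⟩ := List.append_of_mem max_mem
  rcases t with _ | ⟨b, t⟩
  · exact .inr (.inl ⟨s, rfl⟩)
  have ⟨nodup, _, disjoint⟩ := List.nodup_append.1 (nodup_of_mem_boundedAv132 hl)
  have eq_n {a : ℕ} (ha : a ∈ s) : a = n := by
    have := lt_add_of_append_max_cons_mem_boundedAv132 hl ha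
    have : a < n + 2 := lt_of_mem_boundedAv132 hl (by simp [ha])
    have : a ≠ n + 1 := disjoint a ha (n + 1) List.mem_cons_self
    lia
  match s with
  | [] => exact .inl ⟨_, rfl⟩
  | [a] => exact .inr (.inr ⟨b :: t, by simp, by simp [eq_n]⟩)
  | a :: c :: s => simp [eq_n] at nodup

end Structure

section MaximumAtEnd

theorem headGE_max (m n : ℕ) : headGE m (n + 1) n = (headGE m n (n - m)).image (n :: ·) := by
  ext l
  simp only [mem_image, ← cons_max_mem_boundedAv132, mem_headGE (n := n + 1)]
  constructor
  · rintro ⟨hl, head⟩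
    obtain ⟨a, t, rfl, ha⟩ := exists_cons_of_mem_boundedAv132 hl
    obtain rfl : a = n := ha.antisymm (head a rfl)
    exact ⟨t, hl, rfl⟩
  · rintro ⟨t, hl, rfl⟩
    exact ⟨hl, by simp⟩

theorem lastGE_max (m n : ℕ) : lastGE m (n + 1) n = (lastGE m n (n - m)).image (· ++ [n]) := by
  ext l
  simp only [mem_image, ← append_max_mem_boundedAv132, mem_lastGE (n := n + 1)]
  constructor
  · rintro ⟨hl, last⟩
    obtain ⟨t, a, rfl, ha⟩ := exists_append_of_mem_boundedAv132 hl
    obtain rfl : a = n := ha.antisymm (last a (by simp))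
    exact ⟨t, hl, rfl⟩
  · rintro ⟨t, hl, rfl⟩
    exact ⟨hl, by simp⟩

theorem card_headGE_max (m n : ℕ) : #(headGE m (n + 1) n) = #(headGE m n (n - m)) := by
  rw [headGE_max, card_image_of_injective _ List.cons_injective]

theorem card_lastGE_max (m n : ℕ) : #(lastGE m (n + 1) n) = #(lastGE m n (n - m)) := by
  rw [lastGE_max, card_image_of_injective _ (List.append_left_injective _)]

theorem cons_append_max_mem_boundedAv132 {m n : ℕ} (hm : 0 < m) {s : List ℕ} :
    (n + 1) :: (s ++ [n]) ∈ boundedAv132 m (n + 2) ↔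
      s ∈ headGE m n (n + 1 - m) ∩ lastGE m n (n - m) := by
  simp only [cons_max_mem_boundedAv132, mem_inter, mem_headGE, append_max_mem_boundedAv132,
    mem_lastGE, Nat.sub_le_iff_le_add]
  cases s with
  | nil => simp [hm]
  | cons a s => grind

theorem headGE_max_inter_lastGE {m : ℕ} (hm : 0 < m) (n : ℕ) :
    headGE m (n + 2) (n + 1) ∩ lastGE m (n + 2) n =
      (headGE m n (n + 1 - m) ∩ lastGE m n (n - m)).image fun s ↦ (n + 1) :: (s ++ [n]) := by
  ext l
  rw [mem_image]
  simp only [← cons_append_max_mem_boundedAv132 hm]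
  rw [mem_inter, mem_headGE, mem_lastGE]
  constructor
  · rintro ⟨⟨hl, head⟩, -, last⟩
    obtain ⟨a, t, rfl, ha⟩ := exists_cons_of_mem_boundedAv132 hl
    obtain rfl : a = n + 1 := ha.antisymm (head a rfl)
    have ht := (mem_headGE.1 (cons_max_mem_boundedAv132.1 hl)).1
    obtain ⟨s, b, rfl, hb⟩ := exists_append_of_mem_boundedAv132 ht
    obtain rfl : b = n := hb.antisymm (last b (by simp [List.getLast?_cons]))
    exact ⟨s, hl, rfl⟩
  · rintro ⟨s, hl, rfl⟩
    exact ⟨⟨hl, by simp⟩, hl, by simp [List.getLast?_cons]⟩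

theorem headGE_inter_lastGE_max (m n j : ℕ) :
    headGE m (n + 2) j ∩ lastGE m (n + 2) (n + 1) =
      (headGE m (n + 1) j ∩ lastGE m (n + 1) (n + 1 - m)).image (· ++ [n + 1]) := by
  ext l
  simp only [lastGE_max, mem_inter, mem_image]
  have head_iff {t : List ℕ} (ht : t ∈ lastGE m (n + 1) (n + 1 - m)) :
      t ++ [n + 1] ∈ headGE m (n + 2) j ↔ t ∈ headGE m (n + 1) j := by
    have mem : t ++ [n + 1] ∈ boundedAv132 m (n + 2) := append_max_mem_boundedAv132.2 ht
    have ht := (mem_lastGE.1 ht).1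
    obtain ⟨a, s, rfl, -⟩ := exists_cons_of_mem_boundedAv132 ht
    rw [mem_headGE, mem_headGE, and_iff_right mem, and_iff_right ht]
    rfl
  constructor
  · rintro ⟨head, t, ht, rfl⟩
    exact ⟨t, ⟨(head_iff ht).1 head, ht⟩, rfl⟩
  · rintro ⟨t, ⟨head, ht⟩, rfl⟩
    exact ⟨(head_iff ht).2 head, t, ht, rfl⟩

end MaximumAtEnd

section Zigzag

/-- The permutation `n - 1, n - 3, …, n - 4, n - 2` of length `n`: the only 2-bounded 132-avoider
that starts with its largest entry and ends with one of its two largest. -/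
def zigzag : ℕ → List ℕ
  | 0 => []
  | 1 => [0]
  | n + 2 => (n + 1) :: (zigzag n ++ [n])

theorem headGE_inter_lastGE_eq_zigzag (n : ℕ) :
    headGE 2 n (n - 1) ∩ lastGE 2 n (n - 2) = {zigzag n} := by
  induction n using Nat.twoStepInduction with
  | zero => decide
  | one => decide
  | more n ih _ =>
    change headGE 2 (n + 2) (n + 1) ∩ lastGE 2 (n + 2) n = _
    rw [headGE_max_inter_lastGE two_pos, show n + 1 - 2 = n - 1 by lia, ih, image_singleton,
      zigzag]

theorem headGE_inter_lastGE_max_eq_zigzag (n : ℕ) :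
    headGE 2 (n + 2) n ∩ lastGE 2 (n + 2) (n + 1) = {zigzag (n + 1) ++ [n + 1]} := by
  rw [headGE_inter_lastGE_max, ← image_singleton (f := (· ++ [n + 1])),
    ← headGE_inter_lastGE_eq_zigzag (n + 1)]
  rfl

end Zigzag

section Recurrences

theorem boundedAv132_two_eq_union (n : ℕ) :
    boundedAv132 2 (n + 2) = headGE 2 (n + 2) n ∪ lastGE 2 (n + 2) (n + 1) := by
  ext l
  rw [mem_union, mem_headGE, mem_lastGE]
  refine ⟨fun hl ↦ ?_, fun h ↦ h.elim And.left And.left⟩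
  obtain ⟨t, rfl⟩ | ⟨t, rfl⟩ | ⟨t, -, rfl⟩ := boundedAv132_two_cases hl
  · exact .inl ⟨hl, by simp⟩
  · exact .inr ⟨hl, by simp⟩
  · exact .inl ⟨hl, by simp⟩

theorem lastGE_two_eq_insert (n : ℕ) :
    lastGE 2 (n + 2) n = insert (zigzag (n + 2)) (lastGE 2 (n + 2) (n + 1)) := by
  have zigzag_eq : {zigzag (n + 2)} = headGE 2 (n + 2) (n + 1) ∩ lastGE 2 (n + 2) n :=
    (headGE_inter_lastGE_eq_zigzag (n + 2)).symm
  rw [Finset.insert_eq, zigzag_eq]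
  ext l
  simp only [mem_union, mem_inter, mem_headGE, mem_lastGE]
  constructor
  · rintro ⟨hl, last⟩
    obtain ⟨t, rfl⟩ | ⟨t, rfl⟩ | ⟨t, ht, rfl⟩ := boundedAv132_two_cases hl
    · exact .inl ⟨⟨hl, by simp⟩, hl, last⟩
    · exact .inr ⟨hl, by simp⟩
    · have t_mem := (mem_headGE.1 ((cons_cons_max_mem_boundedAv132 two_pos).1 hl)).1
      have := last (t.getLast ht)
        (List.mem_getLast?_cons (List.mem_getLast?_cons (List.getLast_mem_getLast? ht)))
      have := lt_of_mem_boundedAv132 t_mem (t.getLast_mem ht)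
      lia
  · rintro (⟨-, h⟩ | ⟨hl, last⟩)
    · exact h
    · exact ⟨hl, fun a ha ↦ (Nat.le_succ n).trans (last a ha)⟩

theorem headGE_two_eq_insert (n : ℕ) :
    headGE 2 (n + 3) (n + 1) = insert (zigzag (n + 2) ++ [n + 2])
      (headGE 2 (n + 3) (n + 2) ∪
        (headGE 2 (n + 1) n).image fun t ↦ (n + 1) :: (n + 2) :: t) := by
  rw [Finset.insert_eq, ← headGE_inter_lastGE_max_eq_zigzag (n + 1)]
  ext l
  simp only [mem_union, mem_inter, mem_image]
  constructor
  · intro h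
    have ⟨hl, head⟩ := mem_headGE.1 h
    obtain ⟨t, rfl⟩ | ⟨t, rfl⟩ | ⟨t, -, rfl⟩ := boundedAv132_two_cases hl
    · exact .inr (.inl (mem_headGE.2 ⟨hl, by simp⟩))
    · exact .inl ⟨h, mem_lastGE.2 ⟨hl, by simp⟩⟩
    · exact .inr (.inr ⟨t, (cons_cons_max_mem_boundedAv132 two_pos).1 hl, rfl⟩)
  · rintro (⟨h, -⟩ | h | ⟨t, ht, rfl⟩)
    · exact h
    · rw [mem_headGE] at h ⊢
      exact ⟨h.1, fun a ha ↦ (Nat.le_succ _).trans (h.2 a ha)⟩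
    · exact mem_headGE.2 ⟨(cons_cons_max_mem_boundedAv132 two_pos).2 ht, by simp⟩

theorem card_lastGE_two (n : ℕ) : #(lastGE 2 (n + 2) (n + 1)) = n + 1 := by
  induction n with
  | zero => decide
  | succ n ih =>
    have zigzag_notMem : zigzag (n + 2) ∉ lastGE 2 (n + 2) (n + 1) := fun h ↦ by
      have := (mem_lastGE.1 h).2 n (by simp [zigzag, List.getLast?_cons])
      lia
    rw [card_lastGE_max]
    change #(lastGE 2 (n + 2) n) = n + 2
    rw [lastGE_two_eq_insert, card_insert_of_notMem zigzag_notMem, ih]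

theorem card_headGE_two (n : ℕ) :
    #(headGE 2 (n + 3) (n + 1)) = #(headGE 2 (n + 2) n) + #(headGE 2 (n + 1) n) + 1 := by
  have disjoint : Disjoint (headGE 2 (n + 3) (n + 2))
      ((headGE 2 (n + 1) n).image fun t ↦ (n + 1) :: (n + 2) :: t) := by
    rw [Finset.disjoint_right]
    simp only [mem_image]
    rintro _ ⟨t, -, rfl⟩ h
    have := (mem_headGE.1 h).2 (n + 1) rfl
    lia
  have zigzag_notMem : zigzag (n + 2) ++ [n + 2] ∉ headGE 2 (n + 3) (n + 2) ∪
      (headGE 2 (n + 1) n).image fun t ↦ (n + 1) :: (n + 2) :: t := by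
    rw [notMem_union, mem_image]
    constructor
    · intro h
      have := (mem_headGE.1 h).2 (n + 1) (by simp [zigzag])
      lia
    · rintro ⟨t, ht, h⟩
      have len : t.length = n + 1 := length_of_mem_boundedAv132 (mem_headGE.1 ht).1
      have last : t.getLast? = some (n + 2) := by
        have ht : t ≠ [] := List.ne_nil_of_length_eq_add_one len
        have := congrArg List.getLast? h
        rwa [List.getLast?_cons_of_ne_nil (by simp), List.getLast?_cons_of_ne_nil ht,
          List.getLast?_concat] at this
      have := lt_of_mem_boundedAv132 (mem_headGE.1 ht).1 (List.mem_of_mem_getLast? last)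
      lia
  have injective : Function.Injective fun t : List ℕ ↦ (n + 1) :: (n + 2) :: t :=
    List.cons_injective.comp List.cons_injective
  rw [headGE_two_eq_insert, card_insert_of_notMem zigzag_notMem, card_union_of_disjoint disjoint,
    card_image_of_injective _ injective, card_headGE_max]
  rfl

theorem aCount_two_add_two (n : ℕ) : aCount 2 (n + 2) = #(headGE 2 (n + 2) n) + n := by
  have inclusion_exclusion := card_union_add_card_inter (headGE 2 (n + 2) n)
    (lastGE 2 (n + 2) (n + 1))
  rw [← boundedAv132_two_eq_union, headGE_inter_lastGE_max_eq_zigzag, card_singleton,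
    card_lastGE_two, ← aCount_eq_card_boundedAv132] at inclusion_exclusion
  lia

theorem aCount_two_recurrence (n : ℕ) :
    aCount 2 (n + 5) + n = aCount 2 (n + 4) + aCount 2 (n + 2) + 2 := by
  have head := card_headGE_two (n + 2)
  have head_max : #(headGE 2 (n + 3) (n + 2)) = #(headGE 2 (n + 2) n) := card_headGE_max 2 (n + 2)
  rw [aCount_two_add_two (n + 3), aCount_two_add_two (n + 2), aCount_two_add_two n]
  lia

end Recurrences

section GeneratingFunction

open PowerSeries

theorem aCount_two_initial_values : aCount 2 0 = 1 ∧ aCount 2 1 = 1 ∧ aCount 2 2 = 2 ∧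
    aCount 2 3 = 5 ∧ aCount 2 4 = 8 := by
  simp only [aCount_eq_card_boundedAv132]
  decide

theorem one_sub_sq_mul_mk_two_sub :
    (1 - X : ℚ⟦X⟧) ^ 2 * PowerSeries.mk (fun n ↦ 2 - (n : ℚ)) = 2 - 3 * X := by
  have inv := mk_one_mul_one_sub_eq_one ℚ
  have inv_sq := mk_add_choose_mul_one_sub_pow_eq_one ℚ 1
  have split : PowerSeries.mk (fun n ↦ 2 - (n : ℚ)) =
      3 * PowerSeries.mk 1 - PowerSeries.mk fun n ↦ ((1 + n).choose 1 : ℚ) := by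
    ext n
    rw [map_sub, ← map_ofNat PowerSeries.C 3, PowerSeries.coeff_C_mul]
    simp only [coeff_mk, Pi.one_apply, Nat.choose_one_right, Nat.cast_add, Nat.cast_one]
    ring
  rw [split]
  linear_combination 3 * (1 - X) * inv - inv_sq

theorem one_sub_X_sub_X_cube_mul_Aps_two :
    (1 - X - X ^ 3) * Aps 2 =
      1 + X ^ 2 + 2 * X ^ 3 + 2 * X ^ 4 + X ^ 5 * PowerSeries.mk (fun n ↦ 2 - (n : ℚ)) := by
  obtain ⟨h0, h1, h2, h3, h4⟩ := aCount_two_initial_values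
  have coeff_two_mul (k : ℕ) (p : ℚ⟦X⟧) : coeff k (2 * p) = 2 * coeff k p := by
    rw [← map_ofNat PowerSeries.C 2, PowerSeries.coeff_C_mul]
  ext n
  simp only [sub_mul, one_mul, map_sub, map_add, coeff_two_mul, coeff_X_pow_mul',
    coeff_X_pow, coeff_one]
  match n with
  | 0 => simp [Aps, h0]
  | 1 => simp [Aps, coeff_succ_X_mul, h0, h1]
  | 2 => norm_num [Aps, coeff_succ_X_mul, h1, h2]
  | 3 => norm_num [Aps, coeff_succ_X_mul, h0, h2, h3]
  | 4 => norm_num [Aps, coeff_succ_X_mul, h1, h3, h4]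
  | n + 5 =>
    have recurrence : (aCount 2 (n + 5) : ℚ) + n = aCount 2 (n + 4) + aCount 2 (n + 2) + 2 :=
      mod_cast aCount_two_recurrence n
    simp only [Aps, coeff_mk, coeff_succ_X_mul, le_add_iff_nonneg_left, zero_le, ↓reduceIte,
      Nat.reduceSubDiff, Nat.add_eq_zero_iff, OfNat.ofNat_ne_zero, and_false, Nat.reduceEqDiff,
      add_zero, mul_zero, add_tsub_cancel_right, zero_add]
    linear_combination recurrence

end GeneratingFunction

theorem case_m_eq_two :
    (1 - PowerSeries.X) ^ 2 * (1 - PowerSeries.X - PowerSeries.X ^ 3) * Aps 2 =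
      1 - 2 * PowerSeries.X + 2 * PowerSeries.X ^ 2 - PowerSeries.X ^ 4 - PowerSeries.X ^ 6 ∧
    aCount 2 0 = 1 ∧ aCount 2 1 = 1 ∧ aCount 2 2 = 2 ∧ aCount 2 3 = 5 ∧
    aCount 2 4 = 8 ∧ aCount 2 5 = 12 ∧ aCount 2 6 = 18 ∧ aCount 2 7 = 26 ∧
    aCount 2 8 = 37 ∧ aCount 2 9 = 53 ∧ aCount 2 10 = 76 ∧ aCount 2 11 = 109 := by
  constructor
  · linear_combination (1 - PowerSeries.X) ^ 2 * one_sub_X_sub_X_cube_mul_Aps_two +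
      PowerSeries.X ^ 5 * one_sub_sq_mul_mk_two_sub
  · obtain ⟨h0, h1, h2, h3, h4⟩ := aCount_two_initial_values
    have h5 := aCount_two_recurrence 0
    have h6 := aCount_two_recurrence 1
    have h7 := aCount_two_recurrence 2
    have h8 := aCount_two_recurrence 3
    have h9 := aCount_two_recurrence 4
    have h10 := aCount_two_recurrence 5
    have h11 := aCount_two_recurrence 6
    lia
end
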